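/- arXiv:1401.6139 — 8 statements merged into one kernel-verified Lean document; each statement's English description precedes it below -/
import Mathlib

section
/- Let k be a commutative ring, L a Lie algebra over k, and let x_0, x_1, …, x_n and y_0, y_1, …, y_m be elements of L. Then ⁅leftComb(x_0,…,x_n), leftComb(y_0,…,y_m)⁆ = Σ_{S ⊆ {1,…,m}} (-1)^{|S|} · leftComb(x_0,…,x_n, y_{s_1},…,y_{s_r}, y_0, y_{t_1},…,y_{t_{m-r}}), where for each subset S the elements of S are listed in decreasing order s_1 > s_2 > … > s_r and the elements of {1,…,m} ∖ S are listed in increasing order t_1 < t_2 < … < t_{m-r}. -/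
/-!
Right multiplication by a left comb expands through the Jacobi identity
`⁅x, ⁅A, b⁆⁆ = ⁅⁅x, A⁆, b⁆ - ⁅⁅x, b⁆, A⁆`. Taking `A = leftComb y₀ (y₁, …, yₘ₋₁)` and `b = yₘ`, the
first term accounts for the subsets `S` not containing the largest index `m` (`yₘ` comes last), and
the second for those containing it (`yₘ` comes immediately after the `x`'s, with a sign `-1`).
The induction is carried out in `bracket_leftComb_sort`, for index sets that are arbitrary finite
subsets of a linear order, adjoining a new maximum at each step.
-/

/-- The left-comb iterated bracket: `leftComb a [b₁,…,bₚ] = [[…[[a,b₁],b₂],…],bₚ]`. -/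
def leftComb {L : Type*} [LieRing L] (a : L) (l : List L) : L :=
  l.foldl (fun x y => ⁅x, y⁆) a

theorem leftComb_append_singleton {L : Type*} [LieRing L] (a : L) (l : List L) (b : L) :
    leftComb a (l ++ [b]) = ⁅leftComb a l, b⁆ := by
  simp [leftComb]

theorem sort_insert_of_forall_lt {ι : Type*} [LinearOrder ι] {a : ι} {T : Finset ι}
    (h : ∀ i ∈ T, i < a) :
    (insert a T).sort (· ≤ ·) = T.sort (· ≤ ·) ++ [a] := by
  have ha : a ∉ T := fun hm => lt_irrefl a (h a hm)
  have hs : (T.sort (· ≤ ·) ++ [a]).Pairwise (· ≤ ·) := by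
    rw [List.pairwise_append]
    refine ⟨T.pairwise_sort _, List.pairwise_singleton _ _, fun i hi j hj => ?_⟩
    rw [List.mem_singleton] at hj
    exact hj ▸ (h i ((T.mem_sort _).1 hi)).le
  have hn : (T.sort (· ≤ ·) ++ [a]).Nodup := by
    rw [List.nodup_append]
    refine ⟨T.sort_nodup _, List.nodup_singleton a, fun i hi j hj => ?_⟩
    rw [List.mem_singleton] at hj
    exact hj ▸ (h i ((T.mem_sort _).1 hi)).ne
  rw [← (List.toFinset_sort (· ≤ ·) hn).2 hs]
  congr 1
  ext i
  simp

/-- The bracket formula for index sets that are arbitrary finite subsets of a linear order.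
The list `xs` is quantified after `T`, since the induction also uses the formula for
`xs ++ [y a]`. -/
theorem bracket_leftComb_sort {L ι : Type*} [LieRing L] [LinearOrder ι] (x0 y0 : L) (y : ι → L)
    (T : Finset ι) : ∀ xs : List L,
    ⁅leftComb x0 xs, leftComb y0 ((T.sort (· ≤ ·)).map y)⁆ =
      ∑ S ∈ T.powerset, ((-1 : ℤ) ^ S.card) •
        leftComb x0 (xs ++ ((S.sort (· ≤ ·)).reverse.map y) ++
          (y0 :: (((T \ S).sort (· ≤ ·)).map y))) := by
  induction T using Finset.induction_on_max with
  | empty => intro xs; simp [leftComb]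
  | insert a T h ih =>
    intro xs
    have ha : a ∉ T := fun hm => lt_irrefl a (h a hm)
    have jacobi (x A b : L) : ⁅x, ⁅A, b⁆⁆ = ⁅⁅x, A⁆, b⁆ - ⁅⁅x, b⁆, A⁆ := by
      rw [leibniz_lie x A b, ← lie_skew A ⁅x, b⁆, sub_eq_add_neg]
    rw [sort_insert_of_forall_lt h, List.map_append, List.map_singleton,
      leftComb_append_singleton, jacobi, ← leftComb_append_singleton x0 xs (y a), ih, ih,
      Finset.sum_powerset_insert ha, sub_eq_add_neg, ← Finset.sum_neg_distrib, sum_lie]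
    congr 1
    · -- Subsets avoiding `a`: the complement gains `a` as its maximum.
      refine Finset.sum_congr rfl fun S hS => ?_
      have haS : a ∉ S := fun hm => ha (Finset.mem_powerset.1 hS hm)
      rw [Finset.insert_sdiff_of_notMem _ haS,
        sort_insert_of_forall_lt fun i hi => h i (Finset.mem_sdiff.1 hi).1, zsmul_lie,
        ← leftComb_append_singleton]
      simp
    · -- Subsets `insert a S`: the decreasing enumeration starts with `a`.
      refine Finset.sum_congr rfl fun S hS => ?_
      have hST := Finset.mem_powerset.1 hS
      have haS : a ∉ S := fun hm => ha (hST hm)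
      rw [Finset.insert_sdiff_insert, Finset.sdiff_insert_of_notMem ha,
        sort_insert_of_forall_lt fun i hi => h i (hST hi),
        Finset.card_insert_of_notMem haS, pow_succ]
      simp

/-- Lemma 4.7 ("crochet") of Hoffbeck–Vespa: rewriting the bracket of two left combs
as a signed sum of left combs, the subset `S` recording which of `y₁,…,yₘ` are placed
(in decreasing order) before `y₀`, the remaining ones being placed after `y₀` in
increasing order. -/
theorem bracket_leftComb_leftComb (k : Type*) [CommRing k] (L : Type*) [LieRing L]
    [LieAlgebra k L] (m : ℕ) (x0 : L) (xs : List L) (y0 : L) (y : Fin m → L) :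
    ⁅leftComb x0 xs, leftComb y0 (List.ofFn y)⁆ =
      ∑ S : Finset (Fin m), ((-1 : ℤ) ^ S.card) •
        leftComb x0 (xs ++ ((S.sort (· ≤ ·)).reverse.map y) ++
          (y0 :: ((Sᶜ.sort (· ≤ ·)).map y))) := by
  have h := bracket_leftComb_sort x0 y0 y Finset.univ xs
  rw [Fin.sort_univ, ← List.ofFn_eq_map, Finset.powerset_univ] at h
  simpa only [Finset.compl_eq_univ_sdiff] using h
end

section
/- Let k be a commutative ring, A a Lie algebra over k, and M a Lie module over A; write [x,a] := -⁅a,x⁆ for the right action of a ∈ A on x ∈ M. Define C_n = M ⊗ A^{⊗n} and the k-linear map d : C_n → C_{n-1} by d(x ⊗ a_1 ⊗ … ⊗ a_n) = Σ_{1 ≤ i < j ≤ n} (-1)^j · x ⊗ a_1 ⊗ … ⊗ a_{i-1} ⊗ ⁅a_i,a_j⁆ ⊗ a_{i+1} ⊗ … ⊗ â_j ⊗ … ⊗ a_n + Σ_{1 ≤ j ≤ n} (-1)^j · [x,a_j] ⊗ a_1 ⊗ … ⊗ â_j ⊗ … ⊗ a_n, where â_j means the factor a_j is omitted. Then d ∘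 d = 0, i.e. the composite C_n → C_{n-1} → C_{n-2} is zero for every n ≥ 2. -/
/-!
Write `C n = M ⊗ A^{⊗n}`. Appending a last factor `b` gives a linear map `s b : C n → C (n+1)`
(`snocMap`), and the images of these maps span `C (n+1)`. Each `a : A` acts on `C n` from the
right as a derivation `θ a` (`rightAct`), with
`θ a (s b c) = s b (θ a c) + s ⁅b, a⁆ c`.
In these terms the differential is determined recursively by
`d (s b c) = s b (d c) + (-1)^(n+1) θ b c` for `c : C n`, the first term being absent for `n = 0`
(`IsLeibnizDiff`). By induction on `n` and the Jacobi identity, `θ` is a right action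
(`rightAct_rightAct`), and it commutes with `d` (`diff_rightAct`). Hence the two terms `± θ b (d c)`
and `∓ d (θ b c)` in `d (d (s b c))` cancel, leaving `s b (d (d c))`, which vanishes by induction.
-/

open scoped TensorProduct

namespace LeibnizComplex

variable {k : Type*} [CommRing k] {A : Type*} [LieRing A] [LieAlgebra k A]
  {M : Type*} [AddCommGroup M] [Module k M]

/-- The map `x ⊗ a₁ ⊗ … ⊗ aₙ ↦ x ⊗ a₁ ⊗ … ⊗ aₙ ⊗ b` appending a last tensor factor. -/
noncomputable def snocMap (k : Type*) [CommRing k] {A : Type*} [LieRing A] [LieAlgebra k A]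
    (M : Type*) [AddCommGroup M] [Module k M] (n : ℕ) (b : A) :
    (M ⊗[k] (⨂[k]^n A)) →ₗ[k] (M ⊗[k] (⨂[k]^(n+1) A)) :=
  LinearMap.lTensor M
    ((PiTensorProduct.lift
      (PiTensorProduct.tprod k (s := fun _ : Fin (n+1) => A)).curryRight).flip b)

lemma snocMap_tprod (n : ℕ) (b : A) (x : M) (a : Fin n → A) :
    snocMap k M n b (x ⊗ₜ[k] PiTensorProduct.tprod k a) =
      x ⊗ₜ[k] PiTensorProduct.tprod k (Fin.snoc a b : Fin (n+1) → A) := by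
  simp [snocMap]

lemma snocMap_add (n : ℕ) (b b' : A) (c : M ⊗[k] (⨂[k]^n A)) :
    snocMap k M n (b + b') c = snocMap k M n b c + snocMap k M n b' c := by
  simp [snocMap, LinearMap.lTensor_add]

lemma hom_ext {n : ℕ} {N : Type*} [AddCommGroup N] [Module k N]
    {f g : (M ⊗[k] (⨂[k]^n A)) →ₗ[k] N}
    (h : ∀ (x : M) (a : Fin n → A), f (x ⊗ₜ[k] PiTensorProduct.tprod k a) =
      g (x ⊗ₜ[k] PiTensorProduct.tprod k a)) : f = g := by
  refine TensorProduct.ext (LinearMap.ext fun x => PiTensorProduct.ext ?_)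
  ext a
  exact h x a

/-- The images of the maps `snocMap k M n b` span `C (n+1)`. -/
lemma hom_ext_snoc {n : ℕ} {N : Type*} [AddCommGroup N] [Module k N]
    {f g : (M ⊗[k] (⨂[k]^(n+1) A)) →ₗ[k] N}
    (h : ∀ b c, f (snocMap k M n b c) = g (snocMap k M n b c)) : f = g := by
  refine hom_ext fun x a => ?_
  have := h (a (Fin.last n)) (x ⊗ₜ[k] PiTensorProduct.tprod k (Fin.init a))
  simpa only [snocMap_tprod, Fin.snoc_init_self] using this

variable [LieRingModule A M] [LieModule k A M]

/-- The right action of `a` on `M ⊗ A^{⊗n}` by derivations, where `a` acts on `M` by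
`x ↦ -⁅a, x⁆` and on each factor `A` by `b ↦ ⁅b, a⁆ = -⁅a, b⁆`. -/
noncomputable def rightAct (k : Type*) [CommRing k] {A : Type*} [LieRing A] [LieAlgebra k A]
    (M : Type*) [AddCommGroup M] [Module k M] [LieRingModule A M] [LieModule k A M]
    (n : ℕ) (a : A) :
    (M ⊗[k] (⨂[k]^n A)) →ₗ[k] (M ⊗[k] (⨂[k]^n A)) :=
  LinearMap.rTensor _ (-(LieModule.toEnd k A M a)) +
    ∑ i : Fin n, LinearMap.lTensor M
      (PiTensorProduct.map (Function.update (fun _ => LinearMap.id) i (-(LieAlgebra.ad k A a))))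

lemma rightAct_tprod (n : ℕ) (a : A) (x : M) (b : Fin n → A) :
    rightAct k M n a (x ⊗ₜ[k] PiTensorProduct.tprod k b) =
      (-⁅a, x⁆) ⊗ₜ[k] PiTensorProduct.tprod k b +
      ∑ i : Fin n, x ⊗ₜ[k] PiTensorProduct.tprod k (Function.update b i ⁅b i, a⁆) := by
  simp only [rightAct, LinearMap.add_apply, LinearMap.sum_apply, LinearMap.rTensor_tmul,
    LinearMap.lTensor_tmul, PiTensorProduct.map_tprod, LinearMap.neg_apply,
    LieModule.toEnd_apply_apply]
  congr 1
  refine Finset.sum_congr rfl fun i _ => ?_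
  congr 2
  ext l
  rcases eq_or_ne l i with rfl | h
  · simp
  · simp [h]

lemma rightAct_snocMap (n : ℕ) (a b : A) (c : M ⊗[k] (⨂[k]^n A)) :
    rightAct k M (n+1) a (snocMap k M n b c) =
      snocMap k M n b (rightAct k M n a c) + snocMap k M n ⁅b, a⁆ c := by
  suffices h : rightAct k M (n+1) a ∘ₗ snocMap k M n b =
      snocMap k M n b ∘ₗ rightAct k M n a + snocMap k M n ⁅b, a⁆ from LinearMap.congr_fun h c
  refine hom_ext fun x e => ?_
  simp only [LinearMap.comp_apply, LinearMap.add_apply, snocMap_tprod, rightAct_tprod, map_add,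
    map_sum, Fin.sum_univ_castSucc, Fin.snoc_castSucc, Fin.snoc_last, Fin.update_snoc_last,
    Fin.snoc_update, add_assoc]

/-- The Jacobi identity makes `rightAct` a right Lie action. -/
lemma rightAct_rightAct (n : ℕ) (a b : A) (c : M ⊗[k] (⨂[k]^n A)) :
    rightAct k M n a (rightAct k M n b c) =
      rightAct k M n b (rightAct k M n a c) + rightAct k M n ⁅b, a⁆ c := by
  suffices h : rightAct k M n a ∘ₗ rightAct k M n b =
      rightAct k M n b ∘ₗ rightAct k M n a + rightAct k M n ⁅b, a⁆ from LinearMap.congr_fun h c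
  clear c
  induction n with
  | zero =>
    refine hom_ext fun x e => ?_
    simp only [LinearMap.comp_apply, LinearMap.add_apply, rightAct_tprod, Finset.univ_eq_empty,
      Finset.sum_empty, add_zero, ← TensorProduct.add_tmul]
    congr 1
    simp only [lie_neg, neg_neg, lie_lie]
    abel
  | succ n ih =>
    refine hom_ext_snoc fun e c => ?_
    have ih' := LinearMap.congr_fun ih c
    have jac : ⁅⁅e, b⁆, a⁆ = ⁅⁅e, a⁆, b⁆ + ⁅e, ⁅b, a⁆⁆ := by
      rw [lie_lie e b a, ← lie_skew b ⁅e, a⁆]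
      abel
    simp only [LinearMap.comp_apply, LinearMap.add_apply] at ih'
    simp only [LinearMap.comp_apply, LinearMap.add_apply, rightAct_snocMap, map_add, ih', jac,
      snocMap_add]
    abel

/-- The recursive description of the Leibniz differential through its values on
`snocMap k M n b c`. -/
structure IsLeibnizDiff
    (d : ∀ n : ℕ, (M ⊗[k] (⨂[k]^(n+1) A)) →ₗ[k] (M ⊗[k] (⨂[k]^n A))) : Prop where
  zero : ∀ b c, d 0 (snocMap k M 0 b c) = -rightAct k M 0 b c
  succ : ∀ n b c, d (n+1) (snocMap k M (n+1) b c) =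
    snocMap k M n b (d n c) + ((-1 : ℤ) ^ (n+2)) • rightAct k M (n+1) b c

variable {d : ∀ n : ℕ, (M ⊗[k] (⨂[k]^(n+1) A)) →ₗ[k] (M ⊗[k] (⨂[k]^n A))}

/-- The differential is equivariant for the right action. -/
lemma diff_rightAct (hd : IsLeibnizDiff d) (n : ℕ) (a : A) (c : M ⊗[k] (⨂[k]^(n+1) A)) :
    d n (rightAct k M (n+1) a c) = rightAct k M n a (d n c) := by
  suffices h : d n ∘ₗ rightAct k M (n+1) a = rightAct k M n a ∘ₗ d n from
    LinearMap.congr_fun h c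
  clear c
  induction n with
  | zero =>
    refine hom_ext_snoc fun b c => ?_
    simp only [LinearMap.comp_apply, rightAct_snocMap, map_add, hd.zero, map_neg,
      rightAct_rightAct 0 a b c]
    abel
  | succ n ih =>
    refine hom_ext_snoc fun b c => ?_
    have ih' := LinearMap.congr_fun ih c
    simp only [LinearMap.comp_apply] at ih'
    simp only [LinearMap.comp_apply, rightAct_snocMap, map_add, hd.succ, map_zsmul, ih',
      rightAct_rightAct (n+1) a b c, smul_add]
    abel

lemma diff_comp_diff (hd : IsLeibnizDiff d) (n : ℕ) : (d n).comp (d (n+1)) = 0 := by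
  induction n with
  | zero =>
    refine hom_ext_snoc fun b c => ?_
    simp [hd.succ, hd.zero, diff_rightAct hd]
  | succ n ih =>
    refine hom_ext_snoc fun b c => ?_
    have ih' := LinearMap.congr_fun ih c
    simp only [LinearMap.comp_apply, LinearMap.zero_apply] at ih'
    simp only [LinearMap.comp_apply, LinearMap.zero_apply, hd.succ, map_add, map_zsmul, ih',
      diff_rightAct hd, map_zero, zero_add, ← add_smul]
    rw [pow_succ (-1 : ℤ) (n+2)]
    simp

/-- The explicit formula for the differential implies the recursive one: the summands in which
the last factor acts make up `rightAct`, the others do not involve the last factor. -/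
lemma isLeibnizDiff_of_formula
    (hd : ∀ (n : ℕ) (x : M) (a : Fin (n+1) → A),
      d n (x ⊗ₜ[k] PiTensorProduct.tprod k a) =
        (∑ j : Fin (n+1), ∑ i : Fin n,
          if (i : ℕ) < (j : ℕ) then
            ((-1 : ℤ) ^ ((j : ℕ) + 1)) •
              (x ⊗ₜ[k] PiTensorProduct.tprod k
                (Function.update (fun l : Fin n => a (j.succAbove l)) i ⁅a i.castSucc, a j⁆))
          else 0)
        + ∑ j : Fin (n+1), ((-1 : ℤ) ^ ((j : ℕ) + 1)) •
            ((-⁅a j, x⁆) ⊗ₜ[k] PiTensorProduct.tprod k (fun l : Fin n => a (j.succAbove l)))) :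
    IsLeibnizDiff d where
  zero b c := by
    suffices h : d 0 ∘ₗ snocMap k M 0 b = -rightAct k M 0 b from LinearMap.congr_fun h c
    refine hom_ext fun x a => ?_
    simp only [LinearMap.comp_apply, LinearMap.neg_apply, snocMap_tprod, hd, rightAct_tprod]
    simp only [Finset.univ_eq_empty, Finset.sum_empty, Finset.sum_const_zero, zero_add, add_zero,
      Fin.sum_univ_succ, Fin.val_zero, pow_one, neg_smul, one_smul]
    rw [Subsingleton.elim (fun l : Fin 0 => (Fin.snoc a b : Fin 1 → A) (Fin.succAbove 0 l)) a]
    rfl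
  succ n b c := by
    suffices h : d (n+1) ∘ₗ snocMap k M (n+1) b =
        snocMap k M n b ∘ₗ d n + ((-1 : ℤ) ^ (n+2)) • rightAct k M (n+1) b from
      LinearMap.congr_fun h c
    refine hom_ext fun x a => ?_
    have key : ∀ j : Fin (n+1),
        (fun l : Fin (n+1) => (Fin.snoc a b : Fin (n+2) → A) (j.castSucc.succAbove l)) =
          (Fin.snoc (fun l : Fin n => a (j.succAbove l)) b : Fin (n+1) → A) := by
      intro j
      ext l
      refine Fin.lastCases ?_ (fun l => ?_) l
      · simp [Fin.succAbove_ne_last_last (Fin.castSucc_lt_last j).ne]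
      · simp [Fin.castSucc_succAbove_castSucc]
    have hlt : ∀ i : Fin (n+1), (i : ℕ) < n + 1 := fun i => i.isLt
    have hnlt : ∀ j : Fin (n+1), ¬ (n < (j : ℕ)) := fun j => by omega
    simp only [LinearMap.comp_apply, LinearMap.add_apply, LinearMap.smul_apply, snocMap_tprod]
    rw [hd, hd, rightAct_tprod, Fin.sum_univ_castSucc, Fin.sum_univ_castSucc (n := n+1)]
    simp only [key, Fin.snoc_castSucc, Fin.snoc_last, Fin.succAbove_last, Fin.val_last, hlt,
      if_true, Fin.val_castSucc]
    -- For `j` not the last index, the condition `i < j` excludes the last `i`.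
    have inner : ∀ j : Fin (n+1), (∑ i : Fin (n+1), if (i : ℕ) < (j : ℕ) then
          ((-1 : ℤ) ^ ((j : ℕ) + 1)) • (x ⊗ₜ[k] PiTensorProduct.tprod k
            (Function.update (Fin.snoc (fun l : Fin n => a (j.succAbove l)) b : Fin (n+1) → A) i
              ⁅a i, a j⁆)) else 0) =
        ∑ i : Fin n, if (i : ℕ) < (j : ℕ) then
          ((-1 : ℤ) ^ ((j : ℕ) + 1)) • (x ⊗ₜ[k] PiTensorProduct.tprod k
            (Fin.snoc (Function.update (fun l : Fin n => a (j.succAbove l)) i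
              ⁅a i.castSucc, a j⁆) b : Fin (n+1) → A)) else 0 := by
      intro j
      rw [Fin.sum_univ_castSucc]
      simp only [Fin.val_castSucc, Fin.val_last, hnlt, if_false, add_zero, Fin.snoc_update]
    simp only [inner, map_add, map_sum, apply_ite (snocMap k M n b), map_zsmul, map_zero,
      snocMap_tprod, smul_add, Finset.smul_sum]
    abel

end LeibnizComplex


/-- The Leibniz differential of a Lie algebra `A` with coefficients in a Lie module `M`
squares to zero.  Here `Cₙ = M ⊗ A^{⊗n}` and `d : C_{n+1} → C_n` is the `k`-linear map
determined on pure tensors `x ⊗ a₁ ⊗ … ⊗ a_{n+1}` (encoded via `a : Fin (n+1) → A`) by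
`d(x ⊗ a₁ ⊗ … ⊗ a_{n+1}) = Σ_{i<j} (-1)^j x ⊗ … ⊗ ⁅aᵢ,aⱼ⁆ ⊗ … ⊗ âⱼ ⊗ …
  + Σ_j (-1)^j [x,aⱼ] ⊗ … ⊗ âⱼ ⊗ …`, with `[x,a] = -⁅a,x⁆`. -/
theorem leibniz_d_squared_zero (k : Type*) [CommRing k]
    (A : Type*) [LieRing A] [LieAlgebra k A]
    (M : Type*) [AddCommGroup M] [Module k M] [LieRingModule A M] [LieModule k A M]
    (d : ∀ n : ℕ, (M ⊗[k] (⨂[k]^(n+1) A)) →ₗ[k] (M ⊗[k] (⨂[k]^n A)))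
    (hd : ∀ (n : ℕ) (x : M) (a : Fin (n+1) → A),
      d n (x ⊗ₜ[k] PiTensorProduct.tprod k a) =
        (∑ j : Fin (n+1), ∑ i : Fin n,
          if (i : ℕ) < (j : ℕ) then
            ((-1 : ℤ) ^ ((j : ℕ) + 1)) •
              (x ⊗ₜ[k] PiTensorProduct.tprod k
                (Function.update (fun l : Fin n => a (j.succAbove l)) i ⁅a i.castSucc, a j⁆))
          else 0)
        + ∑ j : Fin (n+1), ((-1 : ℤ) ^ ((j : ℕ) + 1)) •
            ((-⁅a j, x⁆) ⊗ₜ[k] PiTensorProduct.tprod k (fun l : Fin n => a (j.succAbove l)))) :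
    ∀ n : ℕ, (d n).comp (d (n+1)) = 0 := by
  exact LeibnizComplex.diff_comp_diff (LeibnizComplex.isLeibnizDiff_of_formula hd)
end

section
/- For natural numbers n ≥ m, the set STuple(n,m) of m-split (n+1)-tuples is in bijection with the set of pairs (α, (w_0, …, w_m)) where α : {0,…,n} → {0,…,m} is a surjection satisfying min α^{-1}(i) < min α^{-1}(j) whenever i < j, and each w_i is a list enumerating the set α^{-1}(i) ∖ {min α^{-1}(i)} without repetition. The bijection sends (B_0 | … | B_m) to the pair where α maps every entry of B_i to i, and w_i is the tail of the block B_i (the block B_i with its head removed). -/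
/-!
A block `Bᵢ` is its head followed by its tail, and the head is by definition the minimum
of the block. Since the blocks partition `{0, …, n}` (`flatten_perm_range_iff`), they are the fibres
of the block-index map `α` (`STuple.blockIndex`); the heads are the fibre minima, their increase is
the shuffle condition on `α`, and the tails enumerate the fibres without their minima. Hence
`STuple.toShufflePair` is well defined, and it is injective because `Bᵢ` is recovered as
`min α⁻¹(i)` followed by `wᵢ`. Conversely, prepending the fibre minima to the lists `wᵢ` of any pair
gives a split tuple (`ShufflePair.toSTuple`), which is a preimage of the pair.
-/

/-- `IsSTuple n m B`: the family of blocks `B₀, …, Bₘ` is an `m`-split `(n+1)`-tuple. -/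
def IsSTuple (n m : ℕ) (B : Fin (m + 1) → List ℕ) : Prop :=
  (∀ i, B i ≠ []) ∧
  ((List.ofFn B).flatten.Perm (List.range (n + 1))) ∧
  (∀ i j : Fin (m + 1), i < j → (B i).headI < (B j).headI) ∧
  (∀ i : Fin (m + 1), ∀ x ∈ (B i).tail, (B i).headI < x)

/-- The set `STuple(n,m)` of `m`-split `(n+1)`-tuples. -/
structure STuple (n m : ℕ) where
  B : Fin (m + 1) → List ℕ
  prop : IsSTuple n m B

/-- A pair `(α, (w₀,…,wₘ))` where `α : {0,…,n} → {0,…,m}` is a surjection such that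
`min α⁻¹(i) < min α⁻¹(j)` whenever `i < j` (a shuffling surjection), and each `wᵢ` is a
list enumerating the set `α⁻¹(i) ∖ {min α⁻¹(i)}` without repetition. -/
structure ShufflePair (n m : ℕ) where
  α : Fin (n + 1) → Fin (m + 1)
  surj : Function.Surjective α
  shuffle : ∀ i j : Fin (m + 1), i < j →
    ∃ x : Fin (n + 1), α x = i ∧ ∀ y : Fin (n + 1), α y = j → x < y
  w : Fin (m + 1) → List ℕ
  nodup : ∀ i, (w i).Nodup
  mem_w : ∀ (i : Fin (m + 1)) (x : ℕ), x ∈ w i ↔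
    ∃ hx : x < n + 1, α ⟨x, hx⟩ = i ∧ ∃ y : Fin (n + 1), α y = i ∧ (y : ℕ) < x

/-- Being a permutation of `0, …, n` means that the blocks are duplicate-free, pairwise disjoint,
and cover exactly `{0, …, n}`. -/
theorem flatten_perm_range_iff (n m : ℕ) (B : Fin (m + 1) → List ℕ) :
    (List.ofFn B).flatten.Perm (List.range (n + 1)) ↔
      (∀ i, (B i).Nodup) ∧ (∀ i j x, x ∈ B i → x ∈ B j → i = j) ∧
      (∀ x, x < n + 1 ↔ ∃ i, x ∈ B i) := by
  have hmem : ∀ x, x ∈ (List.ofFn B).flatten ↔ ∃ i, x ∈ B i := by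
    intro x
    simp [List.mem_flatten, List.mem_ofFn, -List.ofFn_succ]
  have hnd : (List.ofFn B).flatten.Nodup ↔
      (∀ i, (B i).Nodup) ∧ (∀ i j x, x ∈ B i → x ∈ B j → i = j) := by
    rw [List.nodup_flatten, List.pairwise_ofFn]
    refine and_congr (by simp [List.mem_ofFn, -List.ofFn_succ])
      ⟨fun h i j x hi hj => ?_, fun h i j hij x hi hj => ?_⟩
    · rcases lt_trichotomy i j with hlt | heq | hlt
      · exact (h hlt hi hj).elim
      · exact heq
      · exact (h hlt hj hi).elim
    · exact hij.ne (h i j x hi hj)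
  constructor
  · intro h
    have h1 := hnd.1 (h.nodup_iff.2 List.nodup_range)
    refine ⟨h1.1, h1.2, fun x => ?_⟩
    rw [← hmem, h.mem_iff, List.mem_range]
  · rintro ⟨h1, h2, h3⟩
    rw [List.perm_ext_iff_of_nodup (hnd.2 ⟨h1, h2⟩) List.nodup_range]
    intro x
    rw [hmem, List.mem_range, h3]

theorem headI_cons_tail_of_ne_nil {l : List ℕ} (h : l ≠ []) : l.headI :: l.tail = l := by
  cases l with
  | nil => exact (h rfl).elim
  | cons a t => rfl

namespace STuple

variable {n m : ℕ} (b : STuple n m)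

theorem mem_iff (i : Fin (m + 1)) (x : ℕ) :
    x ∈ b.B i ↔ x = (b.B i).headI ∨ x ∈ (b.B i).tail := by
  conv_lhs => rw [← headI_cons_tail_of_ne_nil (b.prop.1 i)]
  exact List.mem_cons

theorem headI_mem (i : Fin (m + 1)) : (b.B i).headI ∈ b.B i := (b.mem_iff i _).2 (Or.inl rfl)

theorem headI_le {i : Fin (m + 1)} {x : ℕ} (hx : x ∈ b.B i) : (b.B i).headI ≤ x := by
  rcases (b.mem_iff i x).1 hx with h | h
  · exact h.ge
  · exact (b.prop.2.2.2 i x h).le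

theorem lt_of_mem {i : Fin (m + 1)} {x : ℕ} (hx : x ∈ b.B i) : x < n + 1 :=
  (((flatten_perm_range_iff n m b.B).1 b.prop.2.1).2.2 x).2 ⟨i, hx⟩

theorem exists_mem (x : Fin (n + 1)) : ∃ i, (x : ℕ) ∈ b.B i :=
  (((flatten_perm_range_iff n m b.B).1 b.prop.2.1).2.2 x).1 x.2

/-- The map sending each entry to the index of the block containing it. -/
noncomputable def blockIndex (x : Fin (n + 1)) : Fin (m + 1) := (b.exists_mem x).choose

theorem blockIndex_eq_iff (x : Fin (n + 1)) (i : Fin (m + 1)) :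
    b.blockIndex x = i ↔ (x : ℕ) ∈ b.B i := by
  have hspec : (x : ℕ) ∈ b.B (b.blockIndex x) := (b.exists_mem x).choose_spec
  constructor
  · rintro rfl
    exact hspec
  · exact ((flatten_perm_range_iff n m b.B).1 b.prop.2.1).2.1 _ _ _ hspec

/-- The pair formed by the block-index map and the tails of the blocks. -/
noncomputable def toShufflePair : ShufflePair n m where
  α := b.blockIndex
  surj i := ⟨⟨_, b.lt_of_mem (b.headI_mem i)⟩, (b.blockIndex_eq_iff _ i).2 (b.headI_mem i)⟩
  shuffle i j hij :=
    ⟨⟨_, b.lt_of_mem (b.headI_mem i)⟩, (b.blockIndex_eq_iff _ i).2 (b.headI_mem i), fun y hy =>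
      (b.prop.2.2.1 i j hij).trans_le (b.headI_le ((b.blockIndex_eq_iff y j).1 hy))⟩
  w i := (b.B i).tail
  nodup i := (((flatten_perm_range_iff n m b.B).1 b.prop.2.1).1 i).tail
  mem_w i x := by
    constructor
    · intro hx
      have hxB := (b.mem_iff i x).2 (Or.inr hx)
      exact ⟨b.lt_of_mem hxB, (b.blockIndex_eq_iff _ i).2 hxB,
        ⟨_, b.lt_of_mem (b.headI_mem i)⟩, (b.blockIndex_eq_iff _ i).2 (b.headI_mem i),
        b.prop.2.2.2 i x hx⟩
    · rintro ⟨hx, hxi, y, hy, hyx⟩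
      have hle := b.headI_le ((b.blockIndex_eq_iff y i).1 hy)
      rcases (b.mem_iff i x).1 ((b.blockIndex_eq_iff _ i).1 hxi) with h | h
      · omega
      · exact h

/-- Each block is its head followed by its tail, and the head is the minimum of the fibre of the
block-index map, so a split tuple is determined by its pair. -/
theorem toShufflePair_injective :
    Function.Injective (toShufflePair : STuple n m → ShufflePair n m) := by
  intro b c h
  have hα : b.blockIndex = c.blockIndex := congrArg ShufflePair.α h
  have hw : ∀ i, (b.B i).tail = (c.B i).tail := fun i => congrFun (congrArg ShufflePair.w h) i
  have hle : ∀ b c : STuple n m, b.blockIndex = c.blockIndex →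
      ∀ i, (b.B i).headI ≤ (c.B i).headI := by
    intro b c hα i
    apply b.headI_le
    have hc := (c.blockIndex_eq_iff ⟨_, c.lt_of_mem (c.headI_mem i)⟩ i).2 (c.headI_mem i)
    rw [← hα] at hc
    exact (b.blockIndex_eq_iff _ i).1 hc
  have hB : b.B = c.B := by
    funext i
    rw [← headI_cons_tail_of_ne_nil (b.prop.1 i), ← headI_cons_tail_of_ne_nil (c.prop.1 i), hw i,
      le_antisymm (hle b c hα i) (hle c b hα.symm i)]
  cases b
  cases c
  cases hB
  rfl

end STuple

namespace ShufflePair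

variable {n m : ℕ} (p : ShufflePair n m)

theorem exists_fiber_min (i : Fin (m + 1)) :
    ∃ x : Fin (n + 1), p.α x = i ∧ ∀ y, p.α y = i → x ≤ y := by
  obtain ⟨x, hx, hmin⟩ := (Set.toFinite {x | p.α x = i}).exists_minimal (p.surj i)
  exact ⟨x, hx, fun y hy => (le_total x y).elim id fun h => hmin hy h⟩

/-- The minimum of the fibre of `α` over `i`. -/
noncomputable def fiberMin (i : Fin (m + 1)) : Fin (n + 1) := (p.exists_fiber_min i).choose

theorem α_fiberMin (i : Fin (m + 1)) : p.α (p.fiberMin i) = i :=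
  (p.exists_fiber_min i).choose_spec.1

theorem fiberMin_le {i : Fin (m + 1)} {y : Fin (n + 1)} (hy : p.α y = i) : p.fiberMin i ≤ y :=
  (p.exists_fiber_min i).choose_spec.2 y hy

theorem fiberMin_lt_of_mem_w {i : Fin (m + 1)} {x : ℕ} (hx : x ∈ p.w i) :
    (p.fiberMin i : ℕ) < x := by
  obtain ⟨_, _, y, hy, hyx⟩ := (p.mem_w i x).1 hx
  exact lt_of_le_of_lt (p.fiberMin_le hy) hyx

/-- Prepending the fibre minimum to `w i` gives an enumeration of the whole fibre over `i`. -/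
theorem mem_block_iff (i : Fin (m + 1)) (x : ℕ) :
    x ∈ (p.fiberMin i : ℕ) :: p.w i ↔ ∃ hx : x < n + 1, p.α ⟨x, hx⟩ = i := by
  rw [List.mem_cons]
  constructor
  · rintro (rfl | hx)
    · exact ⟨(p.fiberMin i).2, p.α_fiberMin i⟩
    · obtain ⟨h, hi, _⟩ := (p.mem_w i x).1 hx
      exact ⟨h, hi⟩
  · rintro ⟨hx, hi⟩
    rcases (Fin.le_def.1 (p.fiberMin_le hi)).eq_or_lt with h | h
    · exact Or.inl h.symm
    · exact Or.inr ((p.mem_w i x).2 ⟨hx, hi, _, p.α_fiberMin i, h⟩)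

/-- The split tuple whose blocks are the fibre minima followed by the lists `w i`. -/
noncomputable def toSTuple : STuple n m where
  B i := (p.fiberMin i : ℕ) :: p.w i
  prop := by
    refine ⟨fun i => List.cons_ne_nil _ _, (flatten_perm_range_iff n m _).2 ⟨?_, ?_, ?_⟩, ?_, ?_⟩
    · intro i
      exact List.nodup_cons.2 ⟨fun h => lt_irrefl _ (p.fiberMin_lt_of_mem_w h), p.nodup i⟩
    · intro i j x hi hj
      obtain ⟨_, rfl⟩ := (p.mem_block_iff i x).1 hi
      obtain ⟨_, rfl⟩ := (p.mem_block_iff j x).1 hj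
      rfl
    · intro x
      exact ⟨fun hx => ⟨p.α ⟨x, hx⟩, (p.mem_block_iff _ x).2 ⟨hx, rfl⟩⟩,
        fun ⟨i, hi⟩ => ((p.mem_block_iff i x).1 hi).1⟩
    · intro i j hij
      obtain ⟨x, hx, hlt⟩ := p.shuffle i j hij
      exact lt_of_le_of_lt (p.fiberMin_le hx) (hlt _ (p.α_fiberMin j))
    · intro i x hx
      exact p.fiberMin_lt_of_mem_w hx

theorem toShufflePair_toSTuple : p.toSTuple.toShufflePair = p := by
  have hα : p.toSTuple.toShufflePair.α = p.α := by
    funext x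
    exact (p.toSTuple.blockIndex_eq_iff x _).2 ((p.mem_block_iff _ x).2 ⟨x.2, rfl⟩)
  have hw : p.toSTuple.toShufflePair.w = p.w := rfl
  generalize p.toSTuple.toShufflePair = q at hα hw
  cases p
  cases q
  cases hα
  cases hw
  rfl

end ShufflePair

/-- Lemma 4.16 of Hoffbeck–Vespa: for `m ≤ n` the set of `m`-split `(n+1)`-tuples is in
bijection with pairs of a shuffling surjection `α` and enumerations `wᵢ` of the fibers
minus their minima; the bijection sends `(B₀ | … | Bₘ)` to the pair where `α` maps every
entry of `Bᵢ` to `i` and `wᵢ` is the tail of the block `Bᵢ`. -/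
theorem sTuple_equiv_shufflePair (n m : ℕ) (h : m ≤ n) :
    ∃ e : STuple n m ≃ ShufflePair n m,
      ∀ (b : STuple n m) (i : Fin (m + 1)),
        (∀ x : Fin (n + 1), (x : ℕ) ∈ b.B i → (e b).α x = i) ∧
        (e b).w i = (b.B i).tail := by
  exact ⟨Equiv.ofBijective STuple.toShufflePair
      ⟨STuple.toShufflePair_injective, fun p => ⟨p.toSTuple, p.toShufflePair_toSTuple⟩⟩,
    fun b i => ⟨fun x hx => (b.blockIndex_eq_iff x i).2 hx, rfl⟩⟩
end

section
/- Let u = (u_0, u_1, …, u_n) ∈ Tuple(n) and let T = {i_1 < i_2 < … < i_m} ⊆ {1,…,n}. Let (B_0 | B_1 | … | B_m) be the splitting of u at the positions of T, i.e. B_0 = (u_0,…,u_{i_1-1}), B_1 = (u_{i_1},…,u_{i_2-1}), …, B_m = (u_{i_m},…,u_n). Then (B_0 | … | B_m) is an m-split (n+1)-tuple if and only if T ⊆ Cuts(u). Consequently, the set of split tuples b (over all m) with p(b) = u is in bijection with the power set of Cuts(u). -/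
/-- `Tuple(n)`: lists containing each element of `{0,…,n}` exactly once, starting
with `0`. -/
def IsTuple (n : ℕ) (u : List ℕ) : Prop :=
  u.Perm (List.range (n + 1)) ∧ u.headI = 0

/-- `Cuts u`: the set of admissible cuts of `u ∈ Tuple(n)`, i.e. indices `1 ≤ i ≤ n`
such that `u_j > u_i` for every `j` with `i < j ≤ n`. -/
def Cuts (n : ℕ) (u : List ℕ) : Finset ℕ :=
  (Finset.Icc 1 n).filter (fun i => ∀ j ∈ Finset.Ioc i n, u.getD i 0 < u.getD j 0)

/-- The positions at which the blocks of `L` begin, when the first block begins at `c`. -/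
def starts : ℕ → List (List ℕ) → Finset ℕ
  | _, [] => ∅
  | c, b :: L => insert c (starts (c + b.length) L)

/-- The order conditions in the definition of a split tuple, for a list of blocks. -/
def BlockConditions (L : List (List ℕ)) : Prop :=
  L.Pairwise (fun b b' => b.headI < b'.headI) ∧ ∀ b ∈ L, ∀ x ∈ b.tail, b.headI < x

/-- The head of each block is smaller than all entries following it in the concatenation. -/
def HeadsMinimal : List (List ℕ) → Prop
  | [] => True
  | b :: L => (∀ x ∈ b.tail ++ L.flatten, b.headI < x) ∧ HeadsMinimal L

theorem blockConditions_iff_headsMinimal (L : List (List ℕ)) (hne : ∀ b ∈ L, b ≠ []) :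
    BlockConditions L ↔ HeadsMinimal L := by
  induction L with
  | nil => simp [BlockConditions, HeadsMinimal]
  | cons b L ih =>
    have ih' := ih (fun b hb => hne b (List.mem_cons_of_mem _ hb))
    rw [HeadsMinimal, ← ih']
    simp only [BlockConditions, List.pairwise_cons, List.mem_cons, forall_eq_or_imp,
      List.mem_append, List.mem_flatten]
    constructor
    · rintro ⟨⟨h1, h2⟩, h3, h4⟩
      refine ⟨?_, h2, h4⟩
      rintro x (hx | ⟨b', hb', hx⟩)
      · exact h3 x hx
      · have h := h1 b' hb'
        have h' := h4 b' hb'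
        cases b' with
        | nil => simp at hx
        | cons a b' =>
          rcases List.mem_cons.1 hx with rfl | hx
          · exact h
          · exact h.trans (h' x hx)
    · rintro ⟨h1, h2, h4⟩
      refine ⟨⟨fun b' hb' => h1 _ (Or.inr ⟨b', hb', ?_⟩), h2⟩, fun x hx => h1 x (Or.inl hx), h4⟩
      have := hne b' (List.mem_cons_of_mem _ hb')
      cases b' with
      | nil => exact absurd rfl this
      | cons a b' => simp

/-- The prefix `w` allows an induction on `L` in which blocks are moved to `w`. -/
theorem headsMinimal_iff_starts (L : List (List ℕ)) (hne : ∀ b ∈ L, b ≠ []) (w : List ℕ) :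
    HeadsMinimal L ↔ ∀ t ∈ starts w.length L, ∀ j, t < j → j < (w ++ L.flatten).length →
      (w ++ L.flatten).getD t 0 < (w ++ L.flatten).getD j 0 := by
  induction L generalizing w with
  | nil => simp [HeadsMinimal, starts]
  | cons b L ih =>
    have ih' := ih (fun b hb => hne b (List.mem_cons_of_mem _ hb)) (w ++ b)
    rw [HeadsMinimal, ih']
    simp only [starts, Finset.mem_insert, forall_eq_or_imp, List.flatten_cons,
      List.length_append, List.append_assoc]
    refine and_congr_left fun _ => ?_
    have hb := hne b List.mem_cons_self
    obtain ⟨a, b, rfl⟩ := List.exists_cons_of_ne_nil hb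
    have key : ∀ k, (w ++ (a :: b ++ L.flatten)).getD (w.length + 1 + k) 0
        = (b ++ L.flatten).getD k 0 := by
      intro k
      rw [List.getD_append_right _ _ _ _ (by omega)]
      have : w.length + 1 + k - w.length = k + 1 := by omega
      rw [this, List.cons_append, List.getD_cons_succ]
    have key0 : (w ++ (a :: b ++ L.flatten)).getD w.length 0 = a := by
      rw [List.getD_append_right _ _ _ _ le_rfl]
      simp
    rw [key0]
    simp only [List.headI_cons, List.tail_cons, List.length_cons]
    constructor
    · intro h j hj hl
      obtain ⟨k, rfl⟩ := Nat.exists_eq_add_of_le (Nat.succ_le_of_lt hj)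
      rw [Nat.succ_eq_add_one, key]
      have hk : k < (b ++ L.flatten).length := by
        rw [List.length_append]; omega
      rw [List.getD_eq_getElem _ _ hk]
      exact h _ (List.getElem_mem hk)
    · intro h x hx
      obtain ⟨k, hk, rfl⟩ := List.getElem_of_mem hx
      have := h (w.length + 1 + k) (by omega) (by rw [List.length_append] at hk; omega)
      rwa [key, List.getD_eq_getElem _ _ hk] at this

theorem mem_starts_bounds (L : List (List ℕ)) (hne : ∀ b ∈ L, b ≠ []) (c t : ℕ)
    (ht : t ∈ starts c L) : c ≤ t ∧ t < c + L.flatten.length := by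
  induction L generalizing c with
  | nil => simp [starts] at ht
  | cons b L ih =>
    have hb := List.length_pos_iff.2 (hne b List.mem_cons_self)
    rw [List.flatten_cons, List.length_append]
    rcases Finset.mem_insert.1 ht with rfl | ht
    · omega
    · have := ih (fun b hb => hne b (List.mem_cons_of_mem _ hb)) _ ht
      omega

theorem mem_starts_iff (L : List (List ℕ)) (c t : ℕ) :
    t ∈ starts c L ↔ ∃ j < L.length, t = c + ((L.map List.length).take j).sum := by
  induction L generalizing c with
  | nil => simp [starts]
  | cons b L ih =>
    rw [starts, Finset.mem_insert, ih]
    constructor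
    · rintro (rfl | ⟨j, hj, rfl⟩)
      · exact ⟨0, by simp, by simp⟩
      · exact ⟨j + 1, by simpa using hj, by simp [add_assoc]⟩
    · rintro ⟨j, hj, rfl⟩
      cases j with
      | zero => left; simp
      | succ j => right; exact ⟨j, by simpa using hj, by simp [add_assoc]⟩

theorem starts_injective (L L' : List (List ℕ)) (hne : ∀ b ∈ L, b ≠ [])
    (hne' : ∀ b ∈ L', b ≠ []) (c : ℕ) (hflat : L.flatten = L'.flatten)
    (h : starts c L = starts c L') : L = L' := by
  induction L generalizing L' c with
  | nil =>
    cases L' with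
    | nil => rfl
    | cons b' L' => exact absurd h.symm (Finset.insert_ne_empty _ _)
  | cons b L ih =>
    cases L' with
    | nil => exact absurd h (Finset.insert_ne_empty _ _)
    | cons b' L' =>
      have hb := List.length_pos_iff.2 (hne b List.mem_cons_self)
      have hb' := List.length_pos_iff.2 (hne' b' List.mem_cons_self)
      have hL := fun b hb => hne b (List.mem_cons_of_mem _ hb)
      have hL' := fun b hb => hne' b (List.mem_cons_of_mem _ hb)
      have h1 : starts (c + b.length) L = starts (c + b'.length) L' := by
        have hc : c ∉ starts (c + b.length) L := fun hc => by
          have := mem_starts_bounds L hL _ _ hc; omega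
        have hc' : c ∉ starts (c + b'.length) L' := fun hc => by
          have := mem_starts_bounds L' hL' _ _ hc; omega
        rw [← Finset.erase_insert hc, ← Finset.erase_insert hc']
        exact congrArg (·.erase c) h
      rw [List.flatten_cons, List.flatten_cons] at hflat
      -- The least start position after `c` determines the length of the first block.
      have hlen : b.length = b'.length := by
        cases L with
        | nil =>
          cases L' with
          | nil => simpa using congrArg List.length hflat
          | cons d' M' => exact absurd h1.symm (Finset.insert_ne_empty _ _)
        | cons d M =>
          cases L' with
          | nil => exact absurd h1 (Finset.insert_ne_empty _ _)
          | cons d' M' =>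
            have e1 : c + b.length ∈ starts (c + b'.length) (d' :: M') :=
              h1 ▸ Finset.mem_insert_self _ _
            have e2 : c + b'.length ∈ starts (c + b.length) (d :: M) :=
              h1 ▸ Finset.mem_insert_self _ _
            have := mem_starts_bounds _ hL' _ _ e1
            have := mem_starts_bounds _ hL _ _ e2
            omega
      obtain ⟨rfl, hfl⟩ := List.append_inj hflat hlen
      rw [ih L' hL hL' _ hfl h1]

theorem exists_starts_eq (v : List ℕ) (hv : v ≠ []) (c : ℕ) (S : Finset ℕ)
    (hS : ∀ t ∈ S, c < t ∧ t < c + v.length) :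
    ∃ L : List (List ℕ), (∀ b ∈ L, b ≠ []) ∧ L.flatten = v ∧ starts c L = insert c S := by
  induction v generalizing c S with
  | nil => exact absurd rfl hv
  | cons a v ih =>
    by_cases hv' : v = []
    · subst hv'
      have : S = ∅ := Finset.eq_empty_of_forall_notMem fun t ht => by
        have := hS t ht
        simp at this
        omega
      subst this
      exact ⟨[[a]], by simp, by simp, by simp [starts]⟩
    · obtain ⟨L, h1, h2, h3⟩ := ih hv' (c + 1) (S.erase (c + 1)) (fun t ht => by
        have h := hS t (Finset.mem_of_mem_erase ht)
        have h' := Finset.ne_of_mem_erase ht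
        rw [List.length_cons] at h
        omega)
      by_cases hc : c + 1 ∈ S
      · refine ⟨[a] :: L, by simpa using h1, by simp [h2], ?_⟩
        rw [starts, List.length_singleton, h3, Finset.insert_erase hc]
      -- Without a cut at `c + 1`, the entry `a` joins the first block.
      · cases L with
        | nil => exact absurd h3.symm (Finset.insert_ne_empty _ _)
        | cons b M =>
          rw [Finset.erase_eq_of_notMem hc] at h3
          have hb := List.length_pos_iff.2 (h1 b List.mem_cons_self)
          have hM := fun b hb => h1 b (List.mem_cons_of_mem _ hb)
          have hn : c + 1 ∉ starts (c + 1 + b.length) M := fun h => by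
            have := mem_starts_bounds M hM _ _ h; omega
          have h4 : starts (c + 1 + b.length) M = S := by
            rw [← Finset.erase_insert hn, ← Finset.erase_insert hc]
            exact congrArg (·.erase (c + 1)) h3
          refine ⟨(a :: b) :: M, by simpa using hM, by simpa using h2, ?_⟩
          rw [starts, List.length_cons, ← h4]
          congr 2
          omega

theorem IsTuple.length_eq {n : ℕ} {u : List ℕ} (hu : IsTuple n u) : u.length = n + 1 := by
  simpa using hu.1.length_eq

theorem blockConditions_iff_cuts {n : ℕ} {u : List ℕ} (hu : IsTuple n u) (L : List (List ℕ))
    (hne : ∀ b ∈ L, b ≠ []) (hflat : L.flatten = u) :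
    BlockConditions L ↔ (starts 0 L).erase 0 ⊆ Cuts n u := by
  have hlen := hu.length_eq
  rw [blockConditions_iff_headsMinimal L hne]
  have h := headsMinimal_iff_starts L hne []
  simp only [List.nil_append, List.length_nil, hflat, hlen] at h
  rw [h]
  constructor
  · intro h t ht
    have ht0 := Finset.ne_of_mem_erase ht
    have ht' := Finset.mem_of_mem_erase ht
    have hb := mem_starts_bounds L hne _ _ ht'
    rw [hflat, hlen] at hb
    simp only [Cuts, Finset.mem_filter, Finset.mem_Icc, Finset.mem_Ioc]
    exact ⟨by omega, fun j hj => h t ht' j hj.1 (by omega)⟩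
  · intro h t ht j hj hjn
    by_cases ht0 : t = 0
    -- Position `0` carries the entry `0`, which does not occur again in `u`.
    · subst ht0
      have hnd : u.Nodup := hu.1.nodup_iff.2 List.nodup_range
      obtain ⟨a, v, rfl⟩ := List.exists_cons_of_length_eq_add_one hlen
      have ha : a = 0 := hu.2
      subst ha
      obtain ⟨k, rfl⟩ := Nat.exists_eq_add_of_lt hj
      have hk : k < v.length := by simp at hlen; omega
      rw [Nat.zero_add, List.getD_cons_succ, List.getD_eq_getElem _ _ hk, List.getD_cons_zero]
      refine Nat.pos_of_ne_zero fun h0 => (List.nodup_cons.1 hnd).1 ?_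
      exact h0 ▸ List.getElem_mem hk
    · have := h (Finset.mem_erase.2 ⟨ht0, ht⟩)
      simp only [Cuts, Finset.mem_filter, Finset.mem_Icc, Finset.mem_Ioc] at this
      exact this.2 j ⟨hj, by omega⟩

theorem isSTuple_iff_blockConditions {n m : ℕ} {u : List ℕ} (hu : IsTuple n u)
    (B : Fin (m + 1) → List ℕ) (hne : ∀ i, B i ≠ []) (hflat : (List.ofFn B).flatten = u) :
    IsSTuple n m B ↔ BlockConditions (List.ofFn B) := by
  rw [IsSTuple, BlockConditions, List.pairwise_ofFn, List.forall_mem_ofFn_iff, hflat]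
  exact ⟨fun h => h.2.2, fun h => ⟨hne, hu.1, h⟩⟩

/-- The set `T` of partial sums `|B₀| + … + |Bⱼ|`, `j < m`, is the set of nonzero starts. -/
theorem eq_starts_erase {m : ℕ} (T : Finset ℕ) (B : Fin (m + 1) → List ℕ) (hne : ∀ i, B i ≠ [])
    (hT : ∀ t : ℕ, t ∈ T ↔ ∃ j : Fin m,
      t = ∑ l ∈ Finset.univ.filter (fun l : Fin (m + 1) => (l : ℕ) ≤ (j : ℕ)),
            (B l).length) :
    T = (starts 0 (List.ofFn B)).erase 0 := by
  ext t
  rw [hT, Finset.mem_erase, mem_starts_iff, List.map_ofFn, List.length_ofFn]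
  simp only [List.sum_take_ofFn, Function.comp_apply, Nat.zero_add]
  constructor
  · rintro ⟨j, rfl⟩
    refine ⟨Nat.ne_of_gt ?_, j + 1, by omega, by simp only [Nat.lt_succ_iff]⟩
    refine Finset.sum_pos (fun i _ => List.length_pos_iff.2 (hne i)) ⟨0, by simp⟩
  · rintro ⟨h0, j, hj, rfl⟩
    cases j with
    | zero => simp at h0
    | succ j => exact ⟨⟨j, by omega⟩, by simp only [Nat.lt_succ_iff]⟩

/-- Lemma 4.31 of Hoffbeck–Vespa.  Let `u ∈ Tuple(n)` and let `B₀, …, Bₘ` be the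
splitting of `u` at the positions of a set `T` of cardinality `m` (so the concatenation
of the blocks is `u` and `T` is the set of partial sums `|B₀| + … + |Bⱼ|`, `j < m`).
Then `(B₀ | … | Bₘ)` is an `m`-split `(n+1)`-tuple iff `T ⊆ Cuts(u)`; consequently,
the set of split tuples `b` (over all `m`) with `p(b) = u` is in bijection with the
power set of `Cuts(u)`. -/
theorem splitting_isSTuple_iff_cuts (n m : ℕ) (u : List ℕ) (hu : IsTuple n u)
    (T : Finset ℕ) (hcard : T.card = m)
    (B : Fin (m + 1) → List ℕ) (hne : ∀ i, B i ≠ [])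
    (hflat : (List.ofFn B).flatten = u)
    (hT : ∀ t : ℕ, t ∈ T ↔ ∃ j : Fin m,
      t = ∑ l ∈ Finset.univ.filter (fun l : Fin (m + 1) => (l : ℕ) ≤ (j : ℕ)),
            (B l).length) :
    (IsSTuple n m B ↔ T ⊆ Cuts n u) ∧
    Nonempty ((Σ m' : ℕ, {b : STuple n m' // (List.ofFn b.B).flatten = u}) ≃
      {S : Finset ℕ // S ⊆ Cuts n u}) := by
  have hne_mem : ∀ {k : ℕ} (C : Fin k → List ℕ), (∀ i, C i ≠ []) →
      ∀ b ∈ List.ofFn C, b ≠ [] := fun C h => (List.forall_mem_ofFn_iff).2 h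
  constructor
  · rw [isSTuple_iff_blockConditions hu B hne hflat,
      blockConditions_iff_cuts hu _ (hne_mem B hne) hflat, eq_starts_erase T B hne hT]
  · have hcuts : ∀ x : (Σ m' : ℕ, {b : STuple n m' // (List.ofFn b.B).flatten = u}),
        (starts 0 (List.ofFn x.2.1.B)).erase 0 ⊆ Cuts n u := fun ⟨m', b, hb⟩ =>
      (blockConditions_iff_cuts hu _ (hne_mem b.B b.prop.1) hb).1
        ((isSTuple_iff_blockConditions hu b.B b.prop.1 hb).1 b.prop)
    refine ⟨Equiv.ofBijective (fun x => ⟨_, hcuts x⟩) ⟨?_, ?_⟩⟩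
    · rintro ⟨k, ⟨C, hC⟩, hCu⟩ ⟨k', ⟨C', hC'⟩, hCu'⟩ h
      have h' := Subtype.mk.inj h
      dsimp only at h' hCu hCu'
      have hz : ∀ {k : ℕ} (C : Fin (k + 1) → List ℕ), 0 ∈ starts 0 (List.ofFn C) := fun C => by
        rw [List.ofFn_succ, starts]
        exact Finset.mem_insert_self _ _
      have hst : starts 0 (List.ofFn C) = starts 0 (List.ofFn C') := by
        rw [← Finset.insert_erase (hz C), h', Finset.insert_erase (hz C')]
      have hL := starts_injective _ _ (hne_mem C hC.1) (hne_mem C' hC'.1) 0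
        (hCu.trans hCu'.symm) hst
      obtain rfl : k = k' := by simpa using congrArg List.length hL
      obtain rfl := List.ofFn_injective hL
      rfl
    · rintro ⟨S, hS⟩
      have hlen := hu.length_eq
      have hSb : ∀ t ∈ S, 0 < t ∧ t < 0 + u.length := fun t ht => by
        have := hS ht
        simp only [Cuts, Finset.mem_filter, Finset.mem_Icc] at this
        omega
      obtain ⟨L, h1, h2, h3⟩ := exists_starts_eq u
        (List.length_pos_iff.1 (by omega)) 0 S hSb
      have h4 : (starts 0 L).erase 0 = S := by
        rw [h3, Finset.erase_insert fun h => lt_irrefl _ (hSb 0 h).1]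
      obtain ⟨k, hk⟩ : ∃ k, L.length = k + 1 := by
        cases L with
        | nil => exact absurd h3.symm (Finset.insert_ne_empty _ _)
        | cons b M => exact ⟨M.length, rfl⟩
      obtain ⟨C, rfl⟩ : ∃ C : Fin (k + 1) → List ℕ, List.ofFn C = L :=
        ⟨fun i => L.get (i.cast hk.symm), by
          rw [← List.ofFn_congr hk L.get, List.ofFn_get]⟩
      have hC : ∀ i, C i ≠ [] := fun i => h1 _ (List.mem_ofFn.2 ⟨i, rfl⟩)
      refine ⟨⟨k, ⟨C, (isSTuple_iff_blockConditions hu C hC h2).2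
        ((blockConditions_iff_cuts hu _ h1 h2).2 (h4 ▸ hS))⟩, h2⟩, Subtype.ext h4⟩
end

section
/- Let x = (x_0,…,x_p) and y = (y_0,…,y_q) be lists of natural numbers such that y_0 < y_ℓ for all 1 ≤ ℓ ≤ q, and let S ⊆ {1,…,q} be a nonempty subset. Then the list x *_S y is lexicographically strictly greater than the concatenation xy. -/
/-!
Both lists begin with `x`, so they are compared at the next entry: this is `y₀` in `x ++ y`,
and `y_m` with `m = max S` in `x *_S y`. Since `1 ≤ m ≤ q`, the hypothesis gives `y₀ < y_m`.
-/

/-- `starOp x y S` is the list `x *_S y`: the entries of `x`, followed by the entries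
`y_ℓ` for `ℓ ∈ S` taken in decreasing order of the index `ℓ`, then `y₀`, then the entries
`y_ℓ` for `ℓ ∈ {1,…,|y|-1} ∖ S` taken in increasing order of the index `ℓ`. -/
def starOp (x y : List ℕ) (S : Finset ℕ) : List ℕ :=
  x ++ ((S.sort (· ≤ ·)).reverse.map (fun ℓ => y.getD ℓ 0)) ++
    y.headI :: ((((Finset.Icc 1 (y.length - 1)) \ S).sort (· ≤ ·)).map (fun ℓ => y.getD ℓ 0))

/-- If `y₀ < y_ℓ` for all `1 ≤ ℓ ≤ q` and `S ⊆ {1,…,q}` is nonempty, then the list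
`x *_S y` is lexicographically strictly greater than the concatenation `x ++ y`. -/
theorem lex_append_lt_starOp (x y : List ℕ) (hx : x ≠ []) (hy : y ≠ [])
    (hhead : ∀ ℓ : ℕ, 1 ≤ ℓ → ℓ < y.length → y.headI < y.getD ℓ 0)
    (S : Finset ℕ) (hS : S ⊆ Finset.Icc 1 (y.length - 1)) (hSne : S.Nonempty) :
    List.Lex (· < ·) (x ++ y) (starOp x y S) := by
  -- `m` is the largest index in `S`; the entry `y_m` follows `x` in `starOp x y S`.
  obtain ⟨m, l, hml⟩ : ∃ m l, (S.sort (· ≤ ·)).reverse = m :: l := by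
    refine List.exists_cons_of_ne_nil fun h => ?_
    obtain ⟨a, ha⟩ := hSne
    have : a ∈ (S.sort (· ≤ ·)).reverse := by simpa using ha
    simp [h] at this
  have hm : m ∈ S := by
    have : m ∈ (S.sort (· ≤ ·)).reverse := by simp [hml]
    simpa using this
  have hmI := Finset.mem_Icc.mp (hS hm)
  have hlt := hhead m hmI.1 (by omega)
  obtain ⟨a, t, rfl⟩ := List.exists_cons_of_ne_nil hy
  rw [starOp, hml, List.map_cons, List.append_assoc, List.cons_append]
  exact List.Lex.append_left _ (List.Lex.rel hlt) x
end

section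
/- Let (B_0 | B_1 | … | B_m) be an m-split (n+1)-tuple and let i, j be indices with 0 ≤ i < m and i+1 < j ≤ m. Then the concatenated list B_0⋯B_i B_j B_{i+1}⋯B_{j-1} B_{j+1}⋯B_m, obtained by moving the block B_j to the position immediately after B_i, is lexicographically strictly greater than the concatenation B_0B_1⋯B_m. -/
/-- For an `m`-split `(n+1)`-tuple `(B₀ | … | Bₘ)` and indices `i < m`, `i+1 < j ≤ m`,
the list `B₀⋯Bᵢ Bⱼ Bᵢ₊₁⋯Bⱼ₋₁ Bⱼ₊₁⋯Bₘ` obtained by moving the block `Bⱼ` to the position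
immediately after `Bᵢ` is lexicographically strictly greater than the concatenation
`B₀B₁⋯Bₘ`. -/
theorem lex_flatten_lt_moveBlock (n m : ℕ) (B : Fin (m + 1) → List ℕ)
    (hB : IsSTuple n m B) (i j : ℕ) (h1 : i + 1 < j) (h2 : j ≤ m) :
    List.Lex (· < ·) ((List.ofFn B).flatten)
      ((((List.ofFn B).take (i + 1)) ++ [(List.ofFn B).getD j []] ++
        (((List.ofFn B).drop (i + 1)).take (j - (i + 1))) ++
        ((List.ofFn B).drop (j + 1))).flatten) := by
  obtain ⟨hne, -, hhead, -⟩ := hB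
  have hi : i + 1 < m + 1 := by omega
  have hj : j < m + 1 := by omega
  have hlt := hhead ⟨i + 1, hi⟩ ⟨j, hj⟩ h1
  have hgetD : (List.ofFn B).getD j [] = B ⟨j, hj⟩ := by
    rw [List.getD_eq_getElem _ _ (by simpa using hj), List.getElem_ofFn]
  have hdrop : (List.ofFn B).drop (i + 1) =
      B ⟨i + 1, hi⟩ :: (List.ofFn B).drop (i + 1 + 1) := by
    rw [List.drop_eq_getElem_cons (by simpa using hi), List.getElem_ofFn]
  obtain ⟨a, s, ha⟩ := List.exists_cons_of_ne_nil (hne ⟨i + 1, hi⟩)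
  obtain ⟨b, t, hb⟩ := List.exists_cons_of_ne_nil (hne ⟨j, hj⟩)
  rw [ha, hb] at hlt
  have hsplit : (List.ofFn B).flatten = ((List.ofFn B).take (i + 1)).flatten ++
      (a :: (s ++ ((List.ofFn B).drop (i + 1 + 1)).flatten)) := by
    conv_lhs => rw [← List.take_append_drop (i + 1) (List.ofFn B), hdrop, ha]
    simp only [List.flatten_append, List.flatten_cons, List.cons_append]
  rw [hsplit, hgetD, hb]
  simp only [List.flatten_append, List.flatten_cons, List.flatten_nil, List.append_assoc,
    List.cons_append]
  exact List.Lex.append_left _ (List.Lex.rel hlt) _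
end

section
/- Let k be a commutative ring, n ≥ 1, and b = (B_0 | … | B_m) ∈ STuple(n,m) with m > 0. In the free k-module on STuple(n,m-1), the element D(b) - Σ_{i=0}^{m-1} (-1)^{i+1} (B_0 | … | B_{i-1} | B_iB_{i+1} | B_{i+2} | … | B_m) is a k-linear combination of split tuples b' ∈ STuple(n,m-1) whose projection p(b') is lexicographically strictly greater than p(b). In particular, for every u ∈ Tuple(n), D maps the submodule spanned by {b : p(b) ≥ u} into the submodule spanned by {b' : p(b') ≥ u}, i.e. D is compatible with the filtration indexed by Tuple(n). -/
/-- The projection `p` sending `(B₀ | … | Bₘ)` to the concatenation `B₀B₁⋯Bₘ`. -/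
def pval {m : ℕ} (B : Fin (m + 1) → List ℕ) : List ℕ := (List.ofFn B).flatten

/-- The family of blocks obtained from `(B₀ | … | B_{m+1})` by replacing `Bᵢ` with
`Bᵢ *_S Bⱼ` and omitting the block `Bⱼ` (for `i < j`). -/
def removeReplace {m : ℕ} (B : Fin (m + 2) → List ℕ) (i j : Fin (m + 2)) (S : Finset ℕ) :
    Fin (m + 1) → List ℕ :=
  fun l => if (l : ℕ) < (j : ℕ) then
      (if (l : ℕ) = (i : ℕ) then starOp (B l.castSucc) (B j) S else B l.castSucc)
    else B l.succ

/-- The degree-`m` part `K(n)_m`: the free `k`-module on `STuple(n,m)`. -/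
abbrev Kmod (k : Type*) [CommRing k] (n m : ℕ) : Type _ := STuple n m →₀ k

open Classical in
/-- The basis element of `K(n)_m` attached to a family of blocks when it is an `m`-split
`(n+1)`-tuple (and `0` otherwise). -/
noncomputable def toBasisK (k : Type*) [CommRing k] (n m : ℕ) (B : Fin (m + 1) → List ℕ) :
    Kmod k n m :=
  if h : IsSTuple n m B then Finsupp.single ⟨B, h⟩ 1 else 0

/-- The map `D : K(n)_{m+1} → K(n)_m`, defined on a basis element `b = (B₀|…|B_{m+1})` by
`D(b) = Σ_{0≤i<j≤m+1} (-1)ʲ Σ_{S ⊆ {1,…,|Bⱼ|-1}} (-1)^{|S|}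
  (B₀ | … | Bᵢ₋₁ | Bᵢ *_S Bⱼ | Bᵢ₊₁ | … | B̂ⱼ | … | B_{m+1})`. -/
noncomputable def Dmap (k : Type*) [CommRing k] (n m : ℕ) :
    Kmod k n (m + 1) →ₗ[k] Kmod k n m :=
  Finsupp.lift (Kmod k n m) k (STuple n (m + 1))
    (fun b => ∑ j : Fin (m + 2), ∑ i : Fin (m + 2),
      if (i : ℕ) < (j : ℕ) then
        ((-1 : ℤ) ^ (j : ℕ)) • ∑ S ∈ (Finset.Icc 1 ((b.B j).length - 1)).powerset,
          ((-1 : ℤ) ^ S.card) • toBasisK k n m (removeReplace b.B i j S)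
      else 0)

/-- Merging two consecutive blocks `Bᵢ` and `Bᵢ₊₁` into their concatenation. -/
def mergeAt {m : ℕ} (B : Fin (m + 2) → List ℕ) (i : Fin (m + 1)) : Fin (m + 1) → List ℕ :=
  fun l => if l = i then B i.castSucc ++ B i.succ
    else if l < i then B l.castSucc else B l.succ

/-! ### The operation `*_S` -/

theorem map_getD_sort_Icc (a : ℕ) (t : List ℕ) :
    ((Finset.Icc 1 t.length).sort (· ≤ ·)).map (fun ℓ => (a :: t).getD ℓ 0) = t := by
  have h : (Finset.Icc 1 t.length).sort (· ≤ ·) = List.range' 1 t.length := by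
    apply List.Perm.eq_of_pairwise (le := (· ≤ ·))
    · intro x y _ _ h1 h2
      exact le_antisymm h1 h2
    · exact Finset.pairwise_sort _ _
    · exact List.pairwise_le_range'
    · rw [List.perm_ext_iff_of_nodup (Finset.sort_nodup _ _) List.nodup_range']
      intro x
      simp only [Finset.mem_sort, Finset.mem_Icc, List.mem_range'_1]
      omega
  rw [h]
  apply List.ext_getElem
  · simp
  · intro i h1 h2
    simp [Nat.add_comm 1 i, h2]

theorem starOp_empty (x y : List ℕ) (hy : y ≠ []) : starOp x y ∅ = x ++ y := by
  obtain ⟨a, t, rfl⟩ := List.exists_cons_of_ne_nil hy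
  have := map_getD_sort_Icc a t
  simp only [starOp, Finset.sort_empty, List.reverse_nil, List.map_nil, List.append_nil,
    List.headI_cons, Finset.sdiff_empty, List.length_cons, Nat.add_sub_cancel]
  rw [this]

theorem starOp_shape (x y : List ℕ) (S : Finset ℕ) (hS : S ⊆ Finset.Icc 1 (y.length - 1))
    (hy : ∀ z ∈ y.tail, y.headI < z) :
    ∃ a w, starOp x y S = x ++ a :: w ∧ y.headI ≤ a ∧ (S ≠ ∅ → y.headI < a) := by
  rcases h : (S.sort (· ≤ ·)).reverse with _ | ⟨l, ls⟩
  · refine ⟨y.headI, ((Finset.Icc 1 (y.length - 1) \ S).sort (· ≤ ·)).map (fun ℓ => y.getD ℓ 0),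
      ?_, le_rfl, fun hne => ?_⟩
    · rw [starOp, h, List.map_nil, List.append_nil]
    · have h' : S.sort (· ≤ ·) = [] := List.reverse_eq_nil_iff.mp h
      have := congrArg List.length h'
      simp at this
      exact absurd this hne
  · have hl : l ∈ S := by
      have : l ∈ (S.sort (· ≤ ·)).reverse := by rw [h]; simp
      simpa using this
    have hl' := Finset.mem_Icc.mp (hS hl)
    have hlt : y.headI < y.getD l 0 := by
      apply hy
      cases y with
      | nil => simp at hl'; omega
      | cons a t =>
        obtain ⟨l, rfl⟩ : ∃ l', l = l' + 1 := ⟨l - 1, by omega⟩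
        have : l < t.length := by simp at hl'; omega
        simp [this]
    have heq := starOp.eq_1 x y S
    rw [h, List.map_cons, List.append_assoc, List.cons_append] at heq
    exact ⟨y.getD l 0, _, heq, hlt.le, fun _ => hlt⟩

/-! ### Projections of the terms of `D(b)` -/

theorem pval_split {m : ℕ} (B : Fin (m + 1) → List ℕ) (i : Fin (m + 1)) :
    pval B = ((List.ofFn B).take i).flatten ++ (B i ++ ((List.ofFn B).drop (i + 1)).flatten) := by
  have h : (List.ofFn B).drop i = B i :: (List.ofFn B).drop (i + 1) := by
    rw [List.drop_eq_getElem_cons (by simp [-List.ofFn_succ]; omega)]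
    simp [-List.ofFn_succ]
  conv_lhs => rw [pval, ← List.take_append_drop i (List.ofFn B), h]
  simp [-List.ofFn_succ]

theorem pval_split_two {m : ℕ} (B : Fin (m + 2) → List ℕ) (i : Fin (m + 1)) :
    pval B = ((List.ofFn B).take i).flatten ++
      (B i.castSucc ++ (B i.succ ++ ((List.ofFn B).drop (i + 2)).flatten)) := by
  have h : (List.ofFn B).drop (i + 1) = B i.succ :: (List.ofFn B).drop (i + 2) := by
    rw [List.drop_eq_getElem_cons (by simp [-List.ofFn_succ]; omega)]
    simp [-List.ofFn_succ, Fin.succ]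
  rw [pval_split B i.castSucc]
  simp [-List.ofFn_succ, h]

theorem take_ofFn_congr {m : ℕ} (B : Fin (m + 2) → List ℕ) (C : Fin (m + 1) → List ℕ)
    (i : Fin (m + 1)) (h : ∀ l, l < i → C l = B l.castSucc) :
    (List.ofFn C).take i = (List.ofFn B).take i := by
  have hi := i.isLt
  apply List.ext_getElem
  · simp [-List.ofFn_succ]; omega
  · intro l h1 h2
    have hl : l < i := by simp [-List.ofFn_succ] at h1; omega
    simpa [-List.ofFn_succ, Fin.castSucc, Fin.castAdd, Fin.castLE] using h ⟨l, by omega⟩ hl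

theorem pval_mergeAt {m : ℕ} (B : Fin (m + 2) → List ℕ) (i : Fin (m + 1)) :
    pval (mergeAt B i) = pval B := by
  have hdrop : (List.ofFn (mergeAt B i)).drop (i + 1) = (List.ofFn B).drop (i + 2) := by
    apply List.ext_getElem
    · simp [-List.ofFn_succ]
    · intro l h1 h2
      have hne : ∀ h : (i : ℕ) + 1 + l < m + 1, (⟨i + 1 + l, h⟩ : Fin (m + 1)) ≠ i := by
        intro h h'
        have := congrArg Fin.val h'
        simp at this
        omega
      have hnl : ∀ h : (i : ℕ) + 1 + l < m + 1, ¬ (⟨i + 1 + l, h⟩ : Fin (m + 1)) < i := by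
        intro h h'
        rw [Fin.lt_def] at h'
        simp at h'
        omega
      simp only [List.getElem_drop, List.getElem_ofFn, mergeAt, hne, hnl, if_false, Fin.succ_mk]
      congr 2
      omega
  rw [pval_split (mergeAt B i) i, pval_split_two B i, hdrop, take_ofFn_congr B (mergeAt B i) i]
  · simp [mergeAt]
  · intro l hl
    simp [mergeAt, hl, hl.ne]

theorem removeReplace_empty {m : ℕ} (B : Fin (m + 2) → List ℕ) (i : Fin (m + 1))
    (h : B i.succ ≠ []) :
    removeReplace B i.castSucc i.succ ∅ = mergeAt B i := by
  funext l
  simp only [removeReplace, mergeAt, Fin.val_succ, Fin.val_castSucc]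
  by_cases hl : l = i
  · subst hl
    simp [starOp_empty _ _ h]
  · have : (l : ℕ) ≠ i := fun h => hl (Fin.ext h)
    by_cases hlt : l < i
    · have h' : (l : ℕ) < i + 1 := by omega
      simp [hl, this, hlt, h']
    · have h' : ¬ (l : ℕ) < i + 1 := by omega
      simp [hl, hlt, h']

/-- If the first entry `a` inserted after `Bᵢ` exceeds the head of `Bᵢ₊₁`, then the projection
strictly increases, since the two projections agree up to that place. -/
theorem lex_removeReplace {m : ℕ} (B : Fin (m + 2) → List ℕ) (i : Fin (m + 1)) (j : Fin (m + 2))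
    (hij : (i : ℕ) < j) (S : Finset ℕ) (hne : B i.succ ≠ []) (a : ℕ) (w : List ℕ)
    (hw : starOp (B i.castSucc) (B j) S = B i.castSucc ++ a :: w) (ha : (B i.succ).headI < a) :
    List.Lex (· < ·) (pval B) (pval (removeReplace B i.castSucc j S)) := by
  obtain ⟨c, t, hc⟩ := List.exists_cons_of_ne_nil hne
  rw [pval_split (removeReplace B i.castSucc j S) i, pval_split_two B i,
    take_ofFn_congr B (removeReplace B i.castSucc j S) i]
  · have : removeReplace B i.castSucc j S i = B i.castSucc ++ a :: w := by
      simp [removeReplace, hij, hw]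
    rw [this, hc]
    simp only [List.append_assoc, List.cons_append]
    apply List.Lex.append_left
    apply List.Lex.append_left
    apply List.Lex.rel
    simpa [hc] using ha
  · intro l hl
    have h1 : (l : ℕ) < j := by omega
    have h2 : (l : ℕ) ≠ i := by omega
    simp [removeReplace, h1, h2]

theorem lex_of_gap {n m : ℕ} (b : STuple n (m + 1)) (i : Fin (m + 1)) (j : Fin (m + 2))
    (hij : (i : ℕ) + 1 < j) (S : Finset ℕ) (hS : S ⊆ Finset.Icc 1 ((b.B j).length - 1)) :
    List.Lex (· < ·) (pval b.B) (pval (removeReplace b.B i.castSucc j S)) := by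
  obtain ⟨a, w, hw, ha, -⟩ := starOp_shape (b.B i.castSucc) (b.B j) S hS (b.prop.2.2.2 j)
  exact lex_removeReplace b.B i j (by omega) S (b.prop.1 _) a w hw
    ((b.prop.2.2.1 i.succ j (by simpa [Fin.lt_def] using hij)).trans_le ha)

theorem lex_of_ne_empty {n m : ℕ} (b : STuple n (m + 1)) (i : Fin (m + 1))
    (S : Finset ℕ) (hS : S ⊆ Finset.Icc 1 ((b.B i.succ).length - 1)) (hne : S ≠ ∅) :
    List.Lex (· < ·) (pval b.B) (pval (removeReplace b.B i.castSucc i.succ S)) := by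
  obtain ⟨a, w, hw, -, ha⟩ :=
    starOp_shape (b.B i.castSucc) (b.B i.succ) S hS (b.prop.2.2.2 i.succ)
  exact lex_removeReplace b.B i i.succ (by simp) S (b.prop.1 _) a w hw (ha hne)

/-! ### Spans of basis elements -/

/-- No hypothesis that `C` is a split tuple is needed: otherwise `toBasisK` is zero. -/
theorem toBasisK_mem_span (k : Type*) [CommRing k] (n m : ℕ) (C : Fin (m + 1) → List ℕ)
    (Q : List ℕ → Prop) (h : Q (pval C)) :
    toBasisK k n m C ∈ Submodule.span k {x : Kmod k n m | ∃ b' : STuple n m,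
      Q (pval b'.B) ∧ x = Finsupp.single b' 1} := by
  rw [toBasisK]
  split_ifs with hC
  · exact Submodule.subset_span ⟨⟨C, hC⟩, h, rfl⟩
  · exact Submodule.zero_mem _

theorem Dmap_sub_mem_span (k : Type*) [CommRing k] (n m : ℕ) (b : STuple n (m + 1)) :
    (Dmap k n m (Finsupp.single b 1) -
        ∑ i : Fin (m + 1), ((-1 : ℤ) ^ ((i : ℕ) + 1)) • toBasisK k n m (mergeAt b.B i))
      ∈ Submodule.span k {x : Kmod k n m | ∃ b' : STuple n m,
          List.Lex (· < ·) (pval b.B) (pval b'.B) ∧ x = Finsupp.single b' 1} := by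
  have hD : Dmap k n m (Finsupp.single b 1) = ∑ j : Fin (m + 2), ∑ i : Fin (m + 2),
      if (i : ℕ) < (j : ℕ) then
        ((-1 : ℤ) ^ (j : ℕ)) • ∑ S ∈ (Finset.Icc 1 ((b.B j).length - 1)).powerset,
          ((-1 : ℤ) ^ S.card) • toBasisK k n m (removeReplace b.B i j S)
      else 0 := by
    simp [Dmap]
  rw [hD, Fin.sum_univ_succ]
  simp only [Fin.val_zero, Nat.not_lt_zero, if_false, Finset.sum_const_zero, zero_add]
  rw [← Finset.sum_sub_distrib]
  refine Submodule.sum_mem _ fun j _ => ?_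
  -- Isolate the summand `i = j - 1`, `S = ∅`, which cancels the merge.
  rw [← Finset.add_sum_erase _ _ (Finset.mem_univ j.castSucc), add_sub_right_comm]
  refine Submodule.add_mem _ ?_ (Submodule.sum_mem _ fun i hi => ?_)
  · rw [if_pos (by simp), Fin.val_succ, ← zsmul_sub,
      ← Finset.add_sum_erase _ _ (Finset.empty_mem_powerset _),
      removeReplace_empty b.B j (b.prop.1 _), Finset.card_empty, pow_zero, one_smul,
      add_sub_cancel_left]
    refine zsmul_mem (Submodule.sum_mem _ fun S hS => zsmul_mem ?_ _) _
    rw [Finset.mem_erase, Finset.mem_powerset] at hS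
    exact toBasisK_mem_span k n m _ _ (lex_of_ne_empty b j S hS.2 hS.1)
  · split_ifs with hij
    · refine zsmul_mem (Submodule.sum_mem _ fun S hS => zsmul_mem ?_ _) _
      rw [Finset.mem_powerset] at hS
      have hne : (i : ℕ) ≠ j := fun h => (Finset.mem_erase.mp hi).1 (Fin.ext h)
      rw [Fin.val_succ] at hij
      have hj := j.isLt
      exact toBasisK_mem_span k n m _ _
        (lex_of_gap b ⟨i, by omega⟩ j.succ (by simp [-List.ofFn_succ]; omega) S hS)
    · exact Submodule.zero_mem _

/-- Lemma 4.22 of Hoffbeck–Vespa: for a split tuple `b = (B₀ | … | B_{m+1})`, the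
difference `D(b) - Σᵢ (-1)^{i+1} (B₀ | … | BᵢBᵢ₊₁ | … | B_{m+1})` is a `k`-linear
combination of split tuples `b'` with `p(b')` lexicographically strictly greater than
`p(b)`; in particular, for every `u ∈ Tuple(n)`, `D` maps the submodule spanned by the
split tuples `b` with `p(b) ≥ u` into the submodule spanned by the split tuples `b'`
with `p(b') ≥ u`, i.e. `D` is compatible with the filtration indexed by `Tuple(n)`. -/
theorem Dmap_filtration_compatible (k : Type*) [CommRing k] (n m : ℕ) (hn : 1 ≤ n) :
    (∀ b : STuple n (m + 1),
      (Dmap k n m (Finsupp.single b 1) -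
          ∑ i : Fin (m + 1), ((-1 : ℤ) ^ ((i : ℕ) + 1)) • toBasisK k n m (mergeAt b.B i))
        ∈ Submodule.span k {x : Kmod k n m | ∃ b' : STuple n m,
            List.Lex (· < ·) (pval b.B) (pval b'.B) ∧ x = Finsupp.single b' 1}) ∧
    (∀ u : List ℕ, IsTuple n u →
      ∀ x ∈ Submodule.span k {x : Kmod k n (m + 1) | ∃ b : STuple n (m + 1),
          (pval b.B = u ∨ List.Lex (· < ·) u (pval b.B)) ∧ x = Finsupp.single b 1},
        Dmap k n m x ∈ Submodule.span k {x : Kmod k n m | ∃ b' : STuple n m,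
          (pval b'.B = u ∨ List.Lex (· < ·) u (pval b'.B)) ∧ x = Finsupp.single b' 1}) := by
  refine ⟨Dmap_sub_mem_span k n m, fun u _ x hx => ?_⟩
  induction hx using Submodule.span_induction with
  | zero => rw [map_zero]; exact Submodule.zero_mem _
  | add x y _ _ hx hy => rw [map_add]; exact Submodule.add_mem _ hx hy
  | smul c x _ hx => rw [map_smul]; exact Submodule.smul_mem _ c hx
  | mem x hx =>
    obtain ⟨b, hb, rfl⟩ := hx
    rw [← sub_add_cancel (Dmap k n m (Finsupp.single b 1))
      (∑ i : Fin (m + 1), ((-1 : ℤ) ^ ((i : ℕ) + 1)) • toBasisK k n m (mergeAt b.B i))]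
    refine Submodule.add_mem _ (Submodule.span_mono ?_ (Dmap_sub_mem_span k n m b))
      (Submodule.sum_mem _ fun i _ => zsmul_mem ?_ _)
    · rintro _ ⟨b', hlt, rfl⟩
      refine ⟨b', Or.inr ?_, rfl⟩
      rcases hb with rfl | hb
      · exact hlt
      · exact List.lt_trans (α := ℕ) hb hlt
    · apply toBasisK_mem_span k n m _ (fun v => v = u ∨ List.Lex (· < ·) u v)
      rw [pval_mergeAt]
      exact hb
end

section
/- Let k be a commutative ring and n a natural number. The map D on the graded k-module with degree-m part the free k-module on STuple(n,m) satisfies D ∘ D = 0; hence (K(n)_*, D) is a chain complex of k-modules. -/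
open Function

/-! ### Left-normed brackets in the free associative algebra -/

/-- The free associative `k`-algebra on `ℕ`, realised as the monoid algebra of words. -/
abbrev WordAlg (k : Type*) [CommRing k] : Type _ := MonoidAlgebra k (FreeMonoid ℕ)

/-- The basis element of the free associative algebra given by a word. -/
noncomputable def word (k : Type*) [CommRing k] (l : List ℕ) : WordAlg k :=
  MonoidAlgebra.single (FreeMonoid.ofList l) 1

lemma word_append (k : Type*) [CommRing k] (l l' : List ℕ) :
    word k (l ++ l') = word k l * word k l' := by
  simp [word, MonoidAlgebra.single_mul_single]

/-- The right action of the free associative algebra on itself for which a letter `c` acts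
by `x ↦ x c - c x`. -/
noncomputable def adR (k : Type*) [CommRing k] :
    WordAlg k →ₐ[k] (Module.End k (WordAlg k))ᵐᵒᵖ :=
  MonoidAlgebra.lift k _ (FreeMonoid ℕ) (FreeMonoid.lift fun c =>
    MulOpposite.op (LinearMap.mulRight k (word k [c]) - LinearMap.mulLeft k (word k [c])))

lemma adR_letter (k : Type*) [CommRing k] (c : ℕ) (x : WordAlg k) :
    (adR k (word k [c])).unop x = x * word k [c] - word k [c] * x := by
  have : FreeMonoid.ofList [c] = FreeMonoid.of c := rfl
  simp [adR, word, this]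

/-- The left-normed bracket `[⋯[[c, c₁], c₂], ⋯]` of a nonempty word, and `0` for the
empty word. -/
noncomputable def bracketWord (k : Type*) [CommRing k] : List ℕ → WordAlg k
  | [] => 0
  | c :: l => (adR k (word k l)).unop (word k [c])

/-- The linear extension of `bracketWord` to the free associative algebra. -/
noncomputable def bracket (k : Type*) [CommRing k] : WordAlg k →ₗ[k] WordAlg k :=
  (Finsupp.linearCombination k fun w : FreeMonoid ℕ => bracketWord k w.toList) ∘ₗ
    (MonoidAlgebra.coeffLinearEquiv k).toLinearMap

lemma bracket_word (k : Type*) [CommRing k] (l : List ℕ) :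
    bracket k (word k l) = bracketWord k l := by
  simp [bracket, word, MonoidAlgebra.coeffLinearEquiv]

lemma bracketWord_append (k : Type*) [CommRing k] {l : List ℕ} (hl : l ≠ []) (l' : List ℕ) :
    bracketWord k (l ++ l') = (adR k (word k l')).unop (bracketWord k l) := by
  cases l with
  | nil => simp at hl
  | cons c l => simp [bracketWord, word_append]

lemma bracketWord_concat (k : Type*) [CommRing k] {l : List ℕ} (hl : l ≠ []) (r : ℕ) :
    bracketWord k (l ++ [r]) =
      bracketWord k l * word k [r] - word k [r] * bracketWord k l := by
  rw [bracketWord_append k hl, adR_letter]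

/-- By the Jacobi identity, a left-normed bracket acts by the commutator with itself. -/
lemma adR_bracketWord (k : Type*) [CommRing k] (l : List ℕ) (x : WordAlg k) :
    (adR k (bracketWord k l)).unop x = x * bracketWord k l - bracketWord k l * x := by
  induction l using List.reverseRecOn generalizing x with
  | nil => simp [bracketWord]
  | append_singleton l r ih =>
    rcases eq_or_ne l [] with rfl | hl
    · have h1 : word k [] = 1 := rfl
      simp [bracketWord, h1, adR_letter]
    · rw [bracketWord_concat k hl]
      simp only [map_sub, map_mul, MulOpposite.unop_sub, MulOpposite.unop_mul,
        LinearMap.sub_apply, Module.End.mul_apply, adR_letter, ih]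
      noncomm_ring

lemma bracket_word_mul (k : Type*) [CommRing k] {l : List ℕ} (hl : l ≠ []) (z : WordAlg k) :
    bracket k (word k l * z) = (adR k z).unop (bracketWord k l) := by
  induction z using MonoidAlgebra.induction_linear with
  | zero => simp
  | add f g hf hg => simp [mul_add, hf, hg]
  | single w r =>
    have h : (MonoidAlgebra.single w r : WordAlg k) = r • word k w.toList := by
      simp [word]
    rw [h, mul_smul_comm, map_smul, map_smul, ← word_append, bracket_word,
      bracketWord_append k hl]
    simp

/-- The Leibniz identity: `L(x L(y)) = [L(x), L(y)]` for the left-normed bracket `L`. -/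
lemma bracket_word_mul_bracket (k : Type*) [CommRing k] {l : List ℕ} (hl : l ≠ [])
    (l' : List ℕ) :
    bracket k (word k l * bracket k (word k l')) =
      bracket k (word k l) * bracket k (word k l') -
        bracket k (word k l') * bracket k (word k l) := by
  rw [bracket_word_mul k hl, bracket_word k l', adR_bracketWord, bracket_word]

/-! ### The operation `x *_S y` as a bracket expansion -/

lemma starOp_eq_append (x y : List ℕ) (S : Finset ℕ) :
    starOp x y S = x ++ starOp [] y S := by
  simp [starOp]

lemma sort_insert_of_lt (S : Finset ℕ) (N : ℕ) (h : ∀ a ∈ S, a < N) :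
    (insert N S).sort (· ≤ ·) = S.sort (· ≤ ·) ++ [N] := by
  have hN : N ∉ S := fun h' => lt_irrefl _ (h N h')
  refine List.Perm.eq_of_pairwise' (r := (· ≤ ·)) (Finset.pairwise_sort _ _) ?_ ?_
  · rw [List.pairwise_append]
    refine ⟨Finset.pairwise_sort _ _, by simp, ?_⟩
    intro a ha b hb
    simp only [Finset.mem_sort, List.mem_singleton] at ha hb
    subst hb
    exact (h a ha).le
  · rw [← Multiset.coe_eq_coe, ← Multiset.coe_add, Finset.sort_eq, Finset.sort_eq,
      Finset.insert_val_of_notMem hN, ← Multiset.singleton_add, add_comm]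
    rfl

lemma map_getD_concat (y : List ℕ) (r : ℕ) (s : List ℕ) (hs : ∀ a ∈ s, a < y.length) :
    s.map (fun ℓ => (y ++ [r]).getD ℓ 0) = s.map (fun ℓ => y.getD ℓ 0) :=
  List.map_congr_left fun a ha => List.getD_append _ _ _ _ (hs a ha)

lemma starOp_concat_of_subset {y : List ℕ} (hy : y ≠ []) (r : ℕ) {S : Finset ℕ}
    (hS : S ⊆ Finset.Icc 1 (y.length - 1)) :
    starOp [] (y ++ [r]) S = starOp [] y S ++ [r] ∧
    starOp [] (y ++ [r]) (insert y.length S) = [r] ++ starOp [] y S := by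
  have hpos : 0 < y.length := List.length_pos_iff.2 hy
  have hlt : ∀ a ∈ Finset.Icc 1 (y.length - 1), a < y.length := by
    intro a ha; simp at ha; omega
  have hhead : (y ++ [r]).headI = y.headI := by cases y <;> simp at hy ⊢
  have hlen : (y ++ [r]).length - 1 = y.length := by simp
  have hlast : (y ++ [r]).getD y.length 0 = r := by simp
  have hIcc : Finset.Icc 1 y.length = insert y.length (Finset.Icc 1 (y.length - 1)) := by
    ext a; simp; omega
  have hn : y.length ∉ S := fun h => lt_irrefl _ (hlt _ (hS h))
  have hn' : y.length ∉ Finset.Icc 1 (y.length - 1) := fun h => lt_irrefl _ (hlt _ h)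
  have e1 : (insert y.length (Finset.Icc 1 (y.length - 1))) \ S =
      insert y.length (Finset.Icc 1 (y.length - 1) \ S) := Finset.insert_sdiff_of_notMem _ hn
  have e2 : (insert y.length (Finset.Icc 1 (y.length - 1))) \ (insert y.length S) =
      Finset.Icc 1 (y.length - 1) \ S := by
    ext a; simp only [Finset.mem_sdiff, Finset.mem_insert]; constructor
    · tauto
    · rintro ⟨h1, h2⟩
      exact ⟨Or.inr h1, fun h => h.elim (fun h => hn' (h ▸ h1)) h2⟩
  have hS' : ∀ a ∈ S, a < y.length := fun a ha => hlt a (hS ha)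
  have hD : ∀ a ∈ Finset.Icc 1 (y.length - 1) \ S, a < y.length :=
    fun a ha => hlt a (Finset.sdiff_subset ha)
  have m1 := map_getD_concat y r (S.sort (· ≤ ·)).reverse (by simpa using hS')
  have m2 := map_getD_concat y r ((Finset.Icc 1 (y.length - 1) \ S).sort (· ≤ ·))
    (by simpa only [Finset.mem_sort] using hD)
  constructor
  · unfold starOp
    rw [hlen, hIcc, e1, sort_insert_of_lt _ _ hD, List.map_append, m1, m2, hhead,
      List.map_singleton, hlast]
    simp
  · unfold starOp
    rw [hlen, hIcc, e2, sort_insert_of_lt _ _ hS', List.reverse_append, List.map_append, m1, m2,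
      hhead, List.reverse_singleton, List.map_singleton, hlast]
    simp

/-- The signed sum over `S` of the words `y` rearranged along `S` is the expansion of the
left-normed bracket of `y` in the free associative algebra. -/
lemma sum_word_starOp_nil (k : Type*) [CommRing k] {y : List ℕ} (hy : y ≠ []) :
    ∑ S ∈ (Finset.Icc 1 (y.length - 1)).powerset,
      ((-1 : ℤ) ^ S.card) • word k (starOp [] y S) = bracketWord k y := by
  induction y using List.reverseRecOn with
  | nil => simp at hy
  | append_singleton y r ih =>
    rcases eq_or_ne y [] with rfl | hy'
    · have h1 : word k [] = 1 := rfl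
      simp [bracketWord, starOp, h1]
    · have hpos : 0 < y.length := List.length_pos_iff.2 hy'
      have hlen : (y ++ [r]).length - 1 = y.length := by simp
      have hIcc : Finset.Icc 1 y.length = insert y.length (Finset.Icc 1 (y.length - 1)) := by
        ext a; simp; omega
      have hn' : y.length ∉ Finset.Icc 1 (y.length - 1) := by simp; omega
      rw [hlen, hIcc, Finset.sum_powerset_insert hn', bracketWord_concat k hy', ← ih hy',
        Finset.sum_mul, Finset.mul_sum, sub_eq_add_neg, ← Finset.sum_neg_distrib]
      congr 1 <;> refine Finset.sum_congr rfl fun S hS => ?_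
      · rw [(starOp_concat_of_subset hy' r (Finset.mem_powerset.1 hS)).1, word_append,
          smul_mul_assoc]
      · have hn : y.length ∉ S := fun h => hn' (Finset.mem_powerset.1 hS h)
        rw [(starOp_concat_of_subset hy' r (Finset.mem_powerset.1 hS)).2, word_append,
          mul_smul_comm, Finset.card_insert_of_notMem hn, pow_succ]
        simp

lemma sum_word_starOp (k : Type*) [CommRing k] (x : List ℕ) {y : List ℕ} (hy : y ≠ []) :
    ∑ S ∈ (Finset.Icc 1 (y.length - 1)).powerset,
      ((-1 : ℤ) ^ S.card) • word k (starOp x y S) = word k x * bracket k (word k y) := by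
  rw [bracket_word, ← sum_word_starOp_nil k hy, Finset.mul_sum]
  refine Finset.sum_congr rfl fun S _ => ?_
  rw [starOp_eq_append, word_append, mul_smul_comm]

lemma starOp_perm (x : List ℕ) {y : List ℕ} (hy : y ≠ []) {S : Finset ℕ}
    (hS : S ⊆ Finset.Icc 1 (y.length - 1)) : (starOp x y S).Perm (x ++ y) := by
  rw [starOp_eq_append]
  refine List.Perm.append_left x ?_
  induction y using List.reverseRecOn generalizing S with
  | nil => simp at hy
  | append_singleton y r ih =>
    rcases eq_or_ne y [] with rfl | hy'
    · have : S = ∅ := by simpa using hS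
      subst this; simp [starOp]
    · have hpos : 0 < y.length := List.length_pos_iff.2 hy'
      have hT : S.erase y.length ⊆ Finset.Icc 1 (y.length - 1) := by
        intro a ha
        have h1 := hS (Finset.mem_of_mem_erase ha)
        have h2 := Finset.ne_of_mem_erase ha
        simp at h1 ⊢; omega
      have := starOp_concat_of_subset hy' r hT
      by_cases h : y.length ∈ S
      · rw [Finset.insert_erase h] at this
        rw [this.2]
        exact (List.perm_append_comm).trans ((ih hy' hT).append_right _)
      · rw [Finset.erase_eq_of_notMem h] at this hT
        rw [this.1]
        exact (ih hy' hT).append_right _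

/-! ### Merging two blocks of a split tuple -/

lemma removeReplace_eq {m : ℕ} (B : Fin (m + 2) → List ℕ) {i j : Fin (m + 2)} (hij : i < j)
    (S : Finset ℕ) :
    removeReplace B i j S = j.removeNth (update B i (starOp (B i) (B j) S)) := by
  funext l
  simp only [removeReplace, Fin.removeNth, Fin.succAbove, Fin.lt_def, Fin.val_castSucc]
  split_ifs with h1 h2
  · have : l.castSucc = i := Fin.ext h2
    simp [this]
  · rw [update_of_ne]
    intro h; exact h2 (congrArg Fin.val h)
  · rw [update_of_ne]
    intro h
    have := congrArg Fin.val h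
    rw [Fin.val_succ] at this
    rw [Fin.lt_def] at hij
    omega

lemma coe_flatten_ofFn {m : ℕ} (B : Fin m → List ℕ) :
    (((List.ofFn B).flatten : List ℕ) : Multiset ℕ) = ∑ i, (B i : Multiset ℕ) := by
  induction m with
  | zero => simp
  | succ m ih => rw [List.ofFn_succ, List.flatten_cons, ← Multiset.coe_add, ih, Fin.sum_univ_succ]

lemma headI_le_of_mem {l : List ℕ} (h : ∀ x ∈ l.tail, l.headI < x) {x : ℕ} (hx : x ∈ l) :
    l.headI ≤ x := by
  cases l with
  | nil => simp at hx
  | cons a l =>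
    rcases List.mem_cons.1 hx with rfl | hx
    · simp
    · exact (h x hx).le

lemma isSTuple_removeReplace {n m : ℕ} {B : Fin (m + 2) → List ℕ} (hB : IsSTuple n (m + 1) B)
    {i j : Fin (m + 2)} (hij : i < j) {S : Finset ℕ}
    (hS : S ⊆ Finset.Icc 1 ((B j).length - 1)) :
    IsSTuple n m (removeReplace B i j S) := by
  obtain ⟨hne, hperm, hmono, hhead⟩ := hB
  rw [removeReplace_eq B hij]
  have hp := starOp_perm (B i) (hne j) hS
  have hcons : ∃ c l, B i = c :: l := List.exists_cons_of_ne_nil (hne i)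
  obtain ⟨c, l, hcl⟩ := hcons
  have hst : starOp (B i) (B j) S = c :: (l ++ starOp [] (B j) S) := by
    rw [starOp_eq_append, hcl]; rfl
  set B' := update B i (starOp (B i) (B j) S) with hB'
  have hne' : ∀ t, B' t ≠ [] := by
    intro t
    rcases eq_or_ne t i with rfl | ht
    · simp [hB', hst]
    · simpa [hB', ht] using hne t
  have hhd : ∀ t, (B' t).headI = (B t).headI := by
    intro t
    rcases eq_or_ne t i with rfl | ht
    · rw [hB', update_self, hst, hcl]; rfl
    · simp [hB', ht]
  refine ⟨fun t => hne' _, ?_, ?_, ?_⟩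
  · refine List.Perm.trans ?_ hperm
    rw [← Multiset.coe_eq_coe, coe_flatten_ofFn, coe_flatten_ofFn,
      Fin.sum_univ_succAbove _ j]
    obtain ⟨s, hs⟩ := Fin.exists_succAbove_eq hij.ne
    rw [← Finset.add_sum_erase _ _ (Finset.mem_univ s),
      ← Finset.add_sum_erase _ (fun t => (B (j.succAbove t) : Multiset ℕ)) (Finset.mem_univ s),
      ← add_assoc]
    congr 1
    · simp only [Fin.removeNth, hs, hB', update_self]
      rw [Multiset.coe_eq_coe.2 hp, ← Multiset.coe_add, add_comm]
    · refine Finset.sum_congr rfl fun t ht => ?_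
      have : j.succAbove t ≠ i := by
        rw [← hs]; exact fun h => Finset.ne_of_mem_erase ht (Fin.succAbove_right_injective h)
      simp [Fin.removeNth, hB', this]
  · intro s t hst'
    simp only [Fin.removeNth, hhd]
    exact hmono _ _ (Fin.strictMono_succAbove j hst')
  · intro t x hx
    simp only [Fin.removeNth] at hx ⊢
    rw [hhd]
    rcases eq_or_ne (j.succAbove t) i with ht | ht
    · rw [ht] at hx ⊢
      simp only [hB', update_self, hst, List.tail_cons, List.mem_append] at hx
      rcases hx with hx | hx
      · exact hhead i x (by simpa [hcl] using hx)
      · have hx' : x ∈ B j := by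
          have := (starOp_perm [] (hne j) hS).mem_iff.1 hx
          simpa using this
        exact (hmono i j hij).trans_le (headI_le_of_mem (hhead j) hx')
    · simp only [hB', update_of_ne ht] at hx
      exact hhead _ x hx

/-! ### The differential as a Leibniz differential -/

/-- For a family `C` of words, the multilinear form sending `(a₀, …, aₘ)` to the product of
the coefficients of `Cᵢ` in `aᵢ`. -/
noncomputable def coeffForm (k : Type*) [CommRing k] {m : ℕ} (C : Fin (m + 1) → List ℕ) :
    MultilinearMap k (fun _ : Fin (m + 1) => WordAlg k) k :=
  (MultilinearMap.mkPiAlgebra k (Fin (m + 1)) k).compLinearMap fun i =>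
    Finsupp.lapply (FreeMonoid.ofList (C i)) ∘ₗ (MonoidAlgebra.coeffLinearEquiv k).toLinearMap

lemma coeffForm_word (k : Type*) [CommRing k] {m : ℕ} (C B : Fin (m + 1) → List ℕ) :
    coeffForm k C (fun i => word k (B i)) = if B = C then 1 else 0 := by
  classical
  have h : ∀ i, ((MonoidAlgebra.coeffLinearEquiv k) (word k (B i)) : FreeMonoid ℕ →₀ k)
      (FreeMonoid.ofList (C i)) = if B i = C i then 1 else 0 := by
    intro i
    simp [word, MonoidAlgebra.coeffLinearEquiv, Finsupp.single_apply]
  simp only [coeffForm, MultilinearMap.compLinearMap_apply, MultilinearMap.mkPiAlgebra_apply,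
    LinearMap.comp_apply, LinearEquiv.coe_coe, Finsupp.lapply_apply, h]
  rw [Finset.prod_ite_zero]
  simp [funext_iff]

/-- The linear functional on `K(n)_m` reading off the coefficient of the family `C`. -/
noncomputable def coeffK (k : Type*) [CommRing k] (n : ℕ) {m : ℕ} (C : Fin (m + 1) → List ℕ) :
    Kmod k n m →ₗ[k] k :=
  Finsupp.lift k k (STuple n m) fun b => coeffForm k C fun i => word k (b.B i)

lemma coeffK_single (k : Type*) [CommRing k] (n : ℕ) {m : ℕ} (C : Fin (m + 1) → List ℕ)
    (b : STuple n m) :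
    coeffK k n C (Finsupp.single b 1) = coeffForm k C fun i => word k (b.B i) := by
  simp [coeffK]

lemma coeffK_apply (k : Type*) [CommRing k] (n : ℕ) {m : ℕ} (b : STuple n m)
    (f : Kmod k n m) : coeffK k n b.B f = f b := by
  classical
  induction f using Finsupp.induction_linear with
  | zero => simp
  | add f g hf hg => simp [hf, hg]
  | single c r =>
    have h : c.B = b.B ↔ c = b := by
      cases c; cases b; simp
    rw [← mul_one r, ← smul_eq_mul, ← Finsupp.smul_single, map_smul, coeffK_single,
      coeffForm_word]
    simp [h, Finsupp.single_apply]

/-- The family `a` with `aᵢ` replaced by `aᵢ L(aⱼ)`, where `L` is the left-normed bracket. -/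
noncomputable def absorb (k : Type*) [CommRing k] {N : ℕ} (i j : Fin N)
    (a : Fin N → WordAlg k) : Fin N → WordAlg k :=
  update a i (a i * bracket k (a j))

/-- The Leibniz differential on families of elements of the free associative algebra,
evaluated by `coeffForm k C`. -/
noncomputable def leibnizD (k : Type*) [CommRing k] {m : ℕ} (C : Fin (m + 1) → List ℕ)
    (a : Fin (m + 2) → WordAlg k) : k :=
  ∑ j : Fin (m + 2), ((-1 : ℤ) ^ (j : ℕ)) • ∑ i ∈ Finset.Iio j,
    coeffForm k C (j.removeNth (absorb k i j a))

lemma removeNth_word_update (k : Type*) [CommRing k] {m : ℕ} (B : Fin (m + 2) → List ℕ)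
    (i j : Fin (m + 2)) (x : List ℕ) :
    (fun l => word k (j.removeNth (update B i x) l)) =
      j.removeNth (update (fun l => word k (B l)) i (word k x)) := by
  funext l
  simp only [Fin.removeNth]
  rcases eq_or_ne (j.succAbove l) i with h | h
  · simp [h]
  · simp [h]

/-- Deleting slot `j` and viewing the remaining form as a function of slot `i ≠ j` is linear. -/
lemma exists_linear_removeNth (k : Type*) [CommRing k] {m : ℕ}
    {V : Type*} [AddCommGroup V] [Module k V]
    (T : MultilinearMap k (fun _ : Fin (m + 1) => WordAlg k) V)
    {i j : Fin (m + 2)} (hij : i ≠ j) (a : Fin (m + 2) → WordAlg k) :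
    ∃ f : WordAlg k →ₗ[k] V, ∀ x, T (j.removeNth (update a i x)) = f x := by
  obtain ⟨s, rfl⟩ := Fin.exists_succAbove_eq hij
  exact ⟨T.toLinearMap (j.removeNth a) s, fun x => by
    rw [Fin.removeNth_update_succAbove]; rfl⟩

/-- Each term of the Leibniz differential is linear in every slot. -/
lemma exists_linear_absorb (k : Type*) [CommRing k] {m : ℕ}
    (T : MultilinearMap k (fun _ : Fin (m + 1) => WordAlg k) k)
    {i j : Fin (m + 2)} (hij : i ≠ j) (p : Fin (m + 2)) (a : Fin (m + 2) → WordAlg k) :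
    ∃ f : WordAlg k →ₗ[k] k, ∀ x, T (j.removeNth (absorb k i j (update a p x))) = f x := by
  rcases eq_or_ne p i with rfl | hpi
  · obtain ⟨f, hf⟩ := exists_linear_removeNth k T hij a
    refine ⟨f ∘ₗ LinearMap.mulRight k (bracket k (a j)), fun x => ?_⟩
    simp [absorb, hij.symm, hf]
  · rcases eq_or_ne p j with rfl | hpj
    · obtain ⟨f, hf⟩ := exists_linear_removeNth k T hij a
      refine ⟨f ∘ₗ LinearMap.mulLeft k (a i) ∘ₗ bracket k, fun x => ?_⟩
      simp [absorb, hij, hf, update_comm hij.symm]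
    · obtain ⟨f, hf⟩ := exists_linear_removeNth k T hpj (absorb k i j a)
      refine ⟨f, fun x => ?_⟩
      rw [← hf]
      simp only [absorb, update_of_ne hpi.symm, update_of_ne hpj.symm]
      rw [update_comm hpi]

lemma exists_linear_leibnizD (k : Type*) [CommRing k] {m : ℕ} (C : Fin (m + 1) → List ℕ)
    (p : Fin (m + 2)) (a : Fin (m + 2) → WordAlg k) :
    ∃ f : WordAlg k →ₗ[k] k, ∀ x, leibnizD k C (update a p x) = f x := by
  have h : ∀ j i : Fin (m + 2), ∃ f : WordAlg k →ₗ[k] k, i < j →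
      ∀ x, coeffForm k C (j.removeNth (absorb k i j (update a p x))) = f x := by
    intro j i
    by_cases hij : i < j
    · obtain ⟨f, hf⟩ := exists_linear_absorb k (coeffForm k C) hij.ne p a
      exact ⟨f, fun _ => hf⟩
    · exact ⟨0, fun h => absurd h hij⟩
  choose f hf using h
  refine ⟨∑ j : Fin (m + 2), ((-1 : ℤ) ^ (j : ℕ)) • ∑ i ∈ Finset.Iio j, f j i, fun x => ?_⟩
  simp only [leibnizD, LinearMap.sum_apply, LinearMap.smul_apply]
  refine Finset.sum_congr rfl fun j _ => ?_
  congr 1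
  exact Finset.sum_congr rfl fun i hi => hf j i (Finset.mem_Iio.1 hi) x

lemma Dmap_single (k : Type*) [CommRing k] (n m : ℕ) (b : STuple n (m + 1)) :
    Dmap k n m (Finsupp.single b 1) = ∑ j : Fin (m + 2), ((-1 : ℤ) ^ (j : ℕ)) •
      ∑ i ∈ Finset.Iio j, ∑ S ∈ (Finset.Icc 1 ((b.B j).length - 1)).powerset,
          ((-1 : ℤ) ^ S.card) • toBasisK k n m (removeReplace b.B i j S) := by
  rw [Dmap, Finsupp.lift_apply, Finsupp.sum_single_index (by simp), one_smul]
  refine Finset.sum_congr rfl fun j _ => ?_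
  rw [Finset.smul_sum, ← Finset.sum_filter]
  refine Finset.sum_congr ?_ fun _ _ => rfl
  ext i; simp

/-- A functional on `K(n)_m` given on basis elements by a function `F` of the words that is
linear in each slot takes on `D b` the value of `F` on the Leibniz differential of `b`. -/
lemma map_Dmap_single (k : Type*) [CommRing k] (n m : ℕ) (b : STuple n (m + 1))
    (φ : Kmod k n m →ₗ[k] k) (F : (Fin (m + 1) → WordAlg k) → k)
    (hφ : ∀ c : STuple n m, φ (Finsupp.single c 1) = F fun i => word k (c.B i))
    (hF : ∀ (p : Fin (m + 1)) (a : Fin (m + 1) → WordAlg k),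
      ∃ f : WordAlg k →ₗ[k] k, ∀ x, F (update a p x) = f x) :
    φ (Dmap k n m (Finsupp.single b 1)) =
      ∑ j : Fin (m + 2), ((-1 : ℤ) ^ (j : ℕ)) • ∑ i ∈ Finset.Iio j,
        F (j.removeNth (absorb k i j fun l => word k (b.B l))) := by
  rw [Dmap_single, map_sum]
  refine Finset.sum_congr rfl fun j _ => ?_
  rw [map_zsmul, map_sum]
  congr 1
  refine Finset.sum_congr rfl fun i hi => ?_
  have hij := Finset.mem_Iio.1 hi
  obtain ⟨s, hs⟩ := Fin.exists_succAbove_eq hij.ne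
  obtain ⟨f, hf⟩ := hF s (j.removeNth fun l => word k (b.B l))
  have hf' : ∀ x, F (j.removeNth (update (fun l => word k (b.B l)) i x)) = f x := by
    intro x
    rw [← hf, ← hs, Fin.removeNth_update_succAbove]
  rw [absorb, hf', ← sum_word_starOp k _ (b.prop.1 j), map_sum, map_sum]
  refine Finset.sum_congr rfl fun S hS => ?_
  have hst := isSTuple_removeReplace b.prop hij (Finset.mem_powerset.1 hS)
  rw [map_zsmul, map_zsmul, toBasisK, dif_pos hst, hφ, ← hf']
  simp only [removeReplace_eq b.B hij, removeNth_word_update]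

/-! ### Cancellation in the square of the differential -/

/-- The cancellation behind `D² = 0`: deleting the slots `u < v` in either order gives the
same contribution.  `M` stands for the evaluation of a family with these two slots deleted. -/
lemma absorb_absorb_sum (k : Type*) [CommRing k] {N : ℕ} {u v : Fin N} (huv : u < v)
    (a : Fin N → WordAlg k)
    (ha : bracket k (a u * bracket k (a v)) =
      bracket k (a u) * bracket k (a v) - bracket k (a v) * bracket k (a u))
    (M : (Fin N → WordAlg k) → k)
    (hM : ∀ y z : Fin N → WordAlg k, (∀ l, l ≠ u → l ≠ v → y l = z l) → M y = M z)
    (hsub : ∀ p, p ≠ u → p ≠ v → ∀ y x z,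
      M (update y p (x - z)) = M (update y p x) - M (update y p z)) :
    ∑ i ∈ Finset.Iio v, ∑ p ∈ Finset.Iio u, M (absorb k p u (absorb k i v a)) =
      ∑ i ∈ Finset.Iio u, ∑ p ∈ (Finset.Iio v).erase u, M (absorb k p v (absorb k i u a)) := by
  rw [Finset.sum_comm]
  refine Finset.sum_congr rfl fun p hp => ?_
  have hpu : p < u := Finset.mem_Iio.1 hp
  have hpv : p < v := hpu.trans huv
  have hp' : p ∈ (Finset.Iio v).erase u := by simp [hpu.ne, hpv]
  rw [← Finset.add_sum_erase _ _ (Finset.mem_Iio.2 huv), ← Finset.add_sum_erase _ _ hp',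
    ← Finset.add_sum_erase _ _ hp', ← add_assoc]
  congr 1
  · have e1 : M (absorb k p u (absorb k u v a)) =
        M (update a p (a p * (bracket k (a u) * bracket k (a v)) -
          a p * (bracket k (a v) * bracket k (a u)))) := by
      refine hM _ _ fun l hlu hlv => ?_
      rcases eq_or_ne l p with rfl | hlp
      · simp [absorb, hlu, ha, mul_sub]
      · simp [absorb, hlp, hlu]
    have e2 : absorb k p u (absorb k p v a) =
        update a p (a p * (bracket k (a v) * bracket k (a u))) := by
      simp [absorb, hpu.ne', mul_assoc]
    have e3 : absorb k p v (absorb k p u a) =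
        update a p (a p * (bracket k (a u) * bracket k (a v))) := by
      simp [absorb, hpv.ne', mul_assoc]
    rw [e1, e2, e3, hsub p hpu.ne hpv.ne, sub_add_cancel]
  · refine Finset.sum_congr rfl fun i hi => ?_
    simp only [Finset.mem_erase, Finset.mem_Iio] at hi
    obtain ⟨hip, hiu, hiv⟩ := hi
    congr 1
    simp only [absorb, update_of_ne hiu.symm, update_of_ne hpv.ne', update_of_ne hip,
      update_of_ne hip.symm]
    rw [update_comm hip]

lemma absorb_removeNth (k : Type*) [CommRing k] {m : ℕ} (j : Fin (m + 2)) (p q : Fin (m + 1))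
    (a : Fin (m + 2) → WordAlg k) :
    absorb k p q (j.removeNth a) = j.removeNth (absorb k (j.succAbove p) (j.succAbove q) a) := by
  rw [absorb, absorb, Fin.removeNth_update_succAbove]; rfl

lemma sum_Iio_succAbove {m : ℕ} {V : Type*} [AddCommMonoid V] (j : Fin (m + 2))
    (l : Fin (m + 1)) (f : Fin (m + 2) → V) :
    ∑ p ∈ Finset.Iio l, f (j.succAbove p) =
      ∑ p ∈ (Finset.Iio (j.succAbove l)).erase j, f p := by
  refine Finset.sum_bij (fun p _ => j.succAbove p) ?_ ?_ ?_ fun _ _ => rfl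
  · intro p hp
    simp only [Finset.mem_erase, Finset.mem_Iio] at hp ⊢
    exact ⟨Fin.succAbove_ne j p, Fin.strictMono_succAbove j hp⟩
  · intro p _ q _ h
    exact Fin.succAbove_right_injective h
  · intro p hp
    simp only [Finset.mem_erase, Finset.mem_Iio] at hp
    obtain ⟨s, rfl⟩ := Fin.exists_succAbove_eq hp.1
    exact ⟨s, Finset.mem_Iio.2 ((Fin.strictMono_succAbove j).lt_iff_lt.1 hp.2), rfl⟩

/-- The contribution to `D²` of the terms deleting first slot `j` and then slot `q`
(in the original numbering), evaluated by `M`. -/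
noncomputable def pairTerm (k : Type*) [CommRing k] {N : ℕ} (a : Fin N → WordAlg k)
    (M : (Fin N → WordAlg k) → k) (j q : Fin N) : k :=
  ∑ i ∈ Finset.Iio j, ∑ p ∈ (Finset.Iio q).erase j, M (absorb k p q (absorb k i j a))

lemma leibniz_sq (k : Type*) [CommRing k] {m : ℕ} (C : Fin (m + 1) → List ℕ)
    (B : Fin (m + 3) → List ℕ) (hB : ∀ i, B i ≠ []) :
    ∑ j : Fin (m + 3), ((-1 : ℤ) ^ (j : ℕ)) • ∑ i ∈ Finset.Iio j,
      leibnizD k C (j.removeNth (absorb k i j fun l => word k (B l))) = 0 := by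
  set a : Fin (m + 3) → WordAlg k := fun l => word k (B l) with ha
  let M : Fin (m + 3) → Fin (m + 2) → (Fin (m + 3) → WordAlg k) → k :=
    fun j l y => coeffForm k C (l.removeNth (j.removeNth y))
  have hrw : ∑ j : Fin (m + 3), ((-1 : ℤ) ^ (j : ℕ)) • ∑ i ∈ Finset.Iio j,
      leibnizD k C (j.removeNth (absorb k i j a)) =
      ∑ x : Fin (m + 3) × Fin (m + 2), ((-1 : ℤ) ^ (x.1 + x.2 : ℕ)) •
        pairTerm k a (M x.1 x.2) x.1 (x.1.succAbove x.2) := by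
    rw [Fintype.sum_prod_type]
    refine Finset.sum_congr rfl fun j _ => ?_
    simp only [leibnizD]
    rw [Finset.sum_comm, Finset.smul_sum]
    refine Finset.sum_congr rfl fun l _ => ?_
    rw [pow_add, mul_smul, ← Finset.smul_sum]
    congr 2
    refine Finset.sum_congr rfl fun i _ => ?_
    simp only [absorb_removeNth]
    exact sum_Iio_succAbove j l fun p =>
      M j l (absorb k p (j.succAbove l) (absorb k i j a))
  rw [hrw]
  have hswap : ∀ (j : Fin (m + 3)) (l : Fin (m + 2)),
      M (j.succAbove l) (l.predAbove j) = M j l := by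
    intro j l
    funext y
    simp only [M]
    rw [Fin.removeNth_removeNth_eq_swap y l j]
  -- Deleting the two slots in either order contributes the same amount.
  have key : ∀ (j : Fin (m + 3)) (l : Fin (m + 2)), j.succAbove l < j →
      pairTerm k a (M j l) j (j.succAbove l) = pairTerm k a (M j l) (j.succAbove l) j := by
    intro j l h
    have hj : j ∉ Finset.Iio (j.succAbove l) := by simp [h.le]
    unfold pairTerm
    rw [Finset.erase_eq_of_notMem hj]
    refine absorb_absorb_sum k h a ?_ (M j l) ?_ ?_
    · exact bracket_word_mul_bracket k (hB _) _
    · intro y z hyz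
      simp only [M]
      congr 1
      funext t
      refine hyz _ ?_ (Fin.succAbove_ne _ _)
      exact fun h' => Fin.succAbove_ne l t (Fin.succAbove_right_injective h')
    · intro p hp1 hp2 y x z
      obtain ⟨s, rfl⟩ := Fin.exists_succAbove_eq hp2
      have hs : s ≠ l := fun h' => hp1 (h' ▸ rfl)
      obtain ⟨t, rfl⟩ := Fin.exists_succAbove_eq hs
      simp only [M, Fin.removeNth_update_succAbove, MultilinearMap.map_update_sub]
  have key' : ∀ (j : Fin (m + 3)) (l : Fin (m + 2)),
      pairTerm k a (M (j.succAbove l) (l.predAbove j)) (j.succAbove l) j =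
        pairTerm k a (M j l) j (j.succAbove l) := by
    intro j l
    rcases lt_or_gt_of_ne (Fin.succAbove_ne j l) with h | h
    · rw [hswap, key j l h]
    · have h2 := key (j.succAbove l) (l.predAbove j)
      rw [Fin.succAbove_succAbove_predAbove, hswap] at h2
      rw [hswap, h2 h]
  refine Finset.sum_involution (fun x _ => (x.1.succAbove x.2, x.2.predAbove x.1)) ?_ ?_ ?_ ?_
  · rintro ⟨j, l⟩ -
    simp only [Fin.succAbove_succAbove_predAbove, key', Fin.neg_one_pow_succAbove_add_predAbove]
    simp
  · rintro ⟨j, l⟩ - - h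
    exact Fin.succAbove_ne j l (congrArg Prod.fst h)
  · simp
  · rintro ⟨j, l⟩ -
    simp [Fin.succAbove_succAbove_predAbove, Fin.predAbove_predAbove_succAbove]

/-- Proposition ("`D ∘ D = 0`"): the map `D` on the graded `k`-module `K(n)` squares to
zero, so `(K(n)_*, D)` is a chain complex of `k`-modules. -/
theorem Dmap_comp_Dmap (k : Type*) [CommRing k] (n : ℕ) :
    ∀ m : ℕ, (Dmap k n m).comp (Dmap k n (m + 1)) = 0 := by
  intro m
  refine Finsupp.lhom_ext' fun b => LinearMap.ext_ring ?_
  refine Finsupp.ext fun c => ?_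
  simp only [LinearMap.comp_apply, Finsupp.lsingle_apply, LinearMap.zero_apply,
    Finsupp.zero_apply]
  rw [← coeffK_apply]
  have h1 : ∀ d : STuple n (m + 1), coeffK k n c.B (Dmap k n m (Finsupp.single d 1)) =
      leibnizD k c.B fun i => word k (d.B i) := fun d =>
    map_Dmap_single k n m d (coeffK k n c.B) (coeffForm k c.B)
      (coeffK_single k n c.B) fun p a => ⟨(coeffForm k c.B).toLinearMap a p, fun _ => rfl⟩
  have h2 := map_Dmap_single k n (m + 1) b (coeffK k n c.B ∘ₗ Dmap k n m) (leibnizD k c.B)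
    h1 (exists_linear_leibnizD k c.B)
  exact h2.trans (leibniz_sq k c.B b.B b.prop.1)
end
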